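/- arXiv:2409.04028 — 3 statements merged into one kernel-verified Lean document; each statement's English description precedes it below -/
import Mathlib

section
/- Let r ∈ (0,1] and let f : 𝔹 → ℂ be holomorphic and F(x) = f(x)·x for x ∈ 𝔹. Then F is biholomorphic on B_r if and only if for every u ∈ X with ‖u‖ = 1 the function f_u(ζ) = ζ·f(ζu) is univalent (injective and holomorphic) on 𝕌_r. -/
open Metric Set

noncomputable section

/-- A holomorphic map is biholomorphic on an open set `s` if it is holomorphic and injective
on `s` and admits a holomorphic inverse on the image `f '' s`. -/
def IsBiholoOn {E₁ E₂ : Type*} [NormedAddCommGroup E₁] [NormedSpace ℂ E₁]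
    [NormedAddCommGroup E₂] [NormedSpace ℂ E₂] (f : E₁ → E₂) (s : Set E₁) : Prop :=
  DifferentiableOn ℂ f s ∧ Set.InjOn f s ∧
    ∃ g : E₂ → E₁, DifferentiableOn ℂ g (f '' s) ∧ ∀ x ∈ s, g (f x) = x

open Filter Topology

theorem aux_not_const {f : ℂ → ℂ} {U : Set ℂ} (hU : IsOpen U) (hi : InjOn f U)
    {z : ℂ} (hz : z ∈ U) : ¬ ∀ᶠ w in 𝓝 z, f w = f z := by
  intro h
  have h1 : ∀ᶠ w in 𝓝[≠] z, w ∈ U ∧ f w = f z :=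
    ((hU.eventually_mem hz).and h).filter_mono nhdsWithin_le_nhds
  obtain ⟨w, ⟨hw, hwf⟩, hne⟩ := (h1.and self_mem_nhdsWithin).exists
  exact hne (hi hw hz hwf)

theorem aux_deriv_ne {f : ℂ → ℂ} {U : Set ℂ} (hU : IsOpen U) (hd : DifferentiableOn ℂ f U)
    (hi : InjOn f U) {z : ℂ} (hz : z ∈ U) : deriv f z ≠ 0 := by
  have han := hd.analyticOnNhd hU
  set h := Function.invFunOn f U with hh
  have hleft : ∀ w ∈ U, h (f w) = w := fun w hw => hi.leftInvOn_invFunOn hw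
  have hopen : ∀ w ∈ U, 𝓝 (f w) ≤ map f (𝓝 w) := fun w hw =>
    (han w hw).eventually_constant_or_nhds_le_map_nhds.resolve_left (aux_not_const hU hi hw)
  have hcont : ∀ w ∈ U, ContinuousAt h (f w) := by
    intro w hw
    have h1 : Tendsto h (map f (𝓝 w)) (𝓝 w) := by
      rw [tendsto_map'_iff]
      refine tendsto_id.congr' ?_
      filter_upwards [hU.mem_nhds hw] with v hv
      exact (hleft v hv).symm
    have h2 := h1.mono_left (hopen w hw)
    rw [ContinuousAt, hleft w hw]
    exact h2
  have hright : ∀ w ∈ U, ∀ᶠ y in 𝓝 (f w), f (h y) = y := by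
    intro w hw
    refine (hopen w hw) ?_
    rw [mem_map]
    filter_upwards [hU.mem_nhds hw] with v hv
    change f (h (f v)) = f v
    rw [hleft v hv]
  have hdiff : ∀ w ∈ U, deriv f w ≠ 0 → DifferentiableAt ℂ h (f w) := by
    intro w hw hne
    refine (HasDerivAt.of_local_left_inverse (f := f) (hcont w hw) ?_ hne (hright w hw)).differentiableAt
    rw [hleft w hw]
    exact (hd.differentiableAt (hU.mem_nhds hw)).hasDerivAt
  have hA : AnalyticAt ℂ h (f z) := by
    refine Complex.analyticAt_of_differentiable_on_punctured_nhds_of_continuousAt ?_ (hcont z hz)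
    rw [eventually_nhdsWithin_iff]
    refine (hopen z hz) ?_
    rw [mem_map]
    rcases (han z hz).deriv.eventually_eq_zero_or_eventually_ne_zero with h0 | h0
    · exfalso
      obtain ⟨ε, hε, hb⟩ := Metric.eventually_nhds_iff_ball.1 ((hU.eventually_mem hz).and h0)
      refine aux_not_const hU hi hz ?_
      filter_upwards [ball_mem_nhds z hε] with w hw
      exact isOpen_ball.is_const_of_deriv_eq_zero (convex_ball z ε).isPreconnected
        (hd.mono fun v hv => (hb v hv).1) (fun v hv => (hb v hv).2) hw (mem_ball_self hε)
    · rw [eventually_nhdsWithin_iff] at h0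
      filter_upwards [h0, hU.mem_nhds hz] with w hw hwU hne
      refine hdiff w hwU (hw ?_)
      rintro rfl
      exact hne rfl
  have hc := (hA.differentiableAt.hasDerivAt).comp z
    (hd.differentiableAt (hU.mem_nhds hz)).hasDerivAt
  have hid : HasDerivAt (h ∘ f) 1 z := by
    refine (hasDerivAt_id z).congr_of_eventuallyEq ?_
    filter_upwards [hU.mem_nhds hz] with v hv
    exact hleft v hv
  intro h0
  have := hc.unique hid
  rw [h0] at this
  simp at this

theorem aux_equiv {X : Type*} [NormedAddCommGroup X] [NormedSpace ℂ X] (a : ℂ) (L : X →L[ℂ] ℂ)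
    (x : X) (ha : a ≠ 0) (hb : a + L x ≠ 0) :
    ∃ e : X ≃L[ℂ] X, (e : X →L[ℂ] X) = a • ContinuousLinearMap.id ℂ X + L.smulRight x := by
  refine ⟨ContinuousLinearEquiv.equivOfInverse (a • ContinuousLinearMap.id ℂ X + L.smulRight x)
    (a⁻¹ • (ContinuousLinearMap.id ℂ X - (a + L x)⁻¹ • L.smulRight x)) ?_ ?_, ?_⟩
  · intro k
    simp only [add_apply, smul_apply,
      ContinuousLinearMap.id_apply, ContinuousLinearMap.smulRight_apply,
      sub_apply, map_add, map_smul]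
    match_scalars <;> field_simp
    ring
  · intro k
    simp only [add_apply, smul_apply,
      ContinuousLinearMap.id_apply, ContinuousLinearMap.smulRight_apply,
      sub_apply, map_sub, map_smul]
    match_scalars <;> field_simp
    ring
  · ext k; rfl

/-- Local openness of `x ↦ f x • x`. -/
theorem aux_open {X : Type*} [NormedAddCommGroup X] [NormedSpace ℂ X] {r : ℝ} (f : X → ℂ)
    (hf : DifferentiableOn ℂ f (ball (0 : X) r))
    (hne : ∀ x ∈ ball (0 : X) r, f x ≠ 0)
    (hinj : ∀ y : X, InjOn (fun μ : ℂ => μ * f (μ • y)) {μ : ℂ | μ • y ∈ ball (0 : X) r})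
    {x₀ : X} (hx₀ : x₀ ∈ ball (0 : X) r) {U : Set X} (hU : U ∈ 𝓝 x₀) :
    ∀ᶠ y in 𝓝 (f x₀ • x₀), ∃ x ∈ U, x ∈ ball (0 : X) r ∧ f x • x = y := by
  set y₀ := f x₀ • x₀ with hy₀
  set m := (f x₀)⁻¹ with hm
  have hmy : m • y₀ = x₀ := by rw [hy₀, hm, smul_smul, inv_mul_cancel₀ (hne _ hx₀), one_smul]
  set V := interior U ∩ ball (0 : X) r with hV
  have hVo : IsOpen V := isOpen_interior.inter isOpen_ball
  have hVx : x₀ ∈ V := ⟨mem_interior_iff_mem_nhds.2 hU, hx₀⟩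
  have hVr : V ⊆ ball (0 : X) r := inter_subset_right
  have hφ1 : m * f (m • y₀) = 1 := by rw [hmy, hm, inv_mul_cancel₀ (hne _ hx₀)]
  have hcs : Continuous (fun p : X × ℂ => p.2 • p.1) := by fun_prop
  -- choose the radius
  obtain ⟨ρ, hρ, hρV⟩ : ∃ ρ > 0, ∀ μ ∈ closedBall m ρ, μ • y₀ ∈ V := by
    have h1 : ∀ᶠ μ in 𝓝 m, μ • y₀ ∈ V := by
      have : Continuous fun μ : ℂ => μ • y₀ := by fun_prop
      exact this.continuousAt.eventually_mem (by rw [hmy]; exact hVo.mem_nhds hVx)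
    obtain ⟨ρ, hρ, h⟩ := nhds_basis_closedBall.eventually_iff.1 h1
    exact ⟨ρ, hρ, fun μ hμ => h hμ⟩
  have hjc : ∀ y : X, ∀ μ : ℂ, μ • y ∈ ball (0 : X) r →
      ContinuousAt (fun p : X × ℂ => p.2 * f (p.2 • p.1)) (y, μ) := by
    intro y μ h
    refine continuousAt_snd.mul ?_
    exact ContinuousAt.comp (f := fun p : X × ℂ => p.2 • p.1) (g := f)
      (hf.differentiableAt (isOpen_ball.mem_nhds h)).continuousAt hcs.continuousAt
  have hmm : m ∈ closedBall m ρ := mem_closedBall_self hρ.le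
  -- tube
  have hT : ∀ᶠ y in 𝓝 y₀, ∀ μ ∈ closedBall m ρ, μ • y ∈ V := by
    refine (isCompact_closedBall m ρ).eventually_forall_of_forall_eventually ?_
    intro μ hμ
    exact hcs.continuousAt.eventually_mem (hVo.mem_nhds (hρV μ hμ))
  -- the minimum on the circle
  obtain ⟨c, hc, hcS⟩ : ∃ c > 0, ∀ μ ∈ sphere m ρ,
      c < ‖μ * f (μ • y₀) - m * f (m • y₀)‖ := by
    have hcon : ContinuousOn (fun μ : ℂ => ‖μ * f (μ • y₀) - m * f (m • y₀)‖) (sphere m ρ) := by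
      intro μ hμ
      have h := hjc y₀ μ (hVr (hρV μ (sphere_subset_closedBall hμ)))
      have h2 : ContinuousAt (fun μ : ℂ => μ * f (μ • y₀)) μ :=
        ContinuousAt.comp (f := fun μ : ℂ => (y₀, μ)) h (by fun_prop)
      exact (h2.sub continuousAt_const).norm.continuousWithinAt
    obtain ⟨μ, hμ, hmin⟩ := (isCompact_sphere m ρ).exists_isMinOn
      (NormedSpace.sphere_nonempty.2 hρ.le) hcon
    have hpos : 0 < ‖μ * f (μ • y₀) - m * f (m • y₀)‖ := by
      rw [norm_pos_iff, sub_ne_zero]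
      intro h
      have := hinj y₀ (hVr (hρV μ (sphere_subset_closedBall hμ))) (hVr (hρV m hmm)) h
      rw [this] at hμ
      simp at hμ
      exact hρ.ne hμ
    exact ⟨_, half_pos hpos, fun ν hν => (half_lt_self hpos).trans_le (hmin hν)⟩
  have hS : ∀ᶠ y in 𝓝 y₀, ∀ μ ∈ sphere m ρ, c < ‖μ * f (μ • y) - m * f (m • y)‖ := by
    refine (isCompact_sphere m ρ).eventually_forall_of_forall_eventually ?_
    intro μ hμ
    have h1 := hjc y₀ μ (hVr (hρV μ (sphere_subset_closedBall hμ)))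
    have h2 : ContinuousAt (fun p : X × ℂ => m * f (m • p.1)) (y₀, μ) :=
      ContinuousAt.comp (f := fun p : X × ℂ => (p.1, m)) (x := (y₀, μ))
        (g := fun p : X × ℂ => p.2 * f (p.2 • p.1)) (hjc y₀ m (hVr (hρV m hmm)))
        (by fun_prop)
    exact (h1.sub h2).norm.eventually_const_lt (hcS μ hμ)
  have hC : ∀ᶠ y in 𝓝 y₀, ‖m * f (m • y) - 1‖ < c / 2 := by
    have h2 : ContinuousAt (fun y : X => ‖m * f (m • y) - 1‖) y₀ :=
      ((ContinuousAt.comp (f := fun y : X => (y, m)) (hjc y₀ m (hVr (hρV m hmm)))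
        (by fun_prop)).sub continuousAt_const).norm
    refine h2.eventually_lt_const ?_
    simp only [hφ1]
    simpa using hc
  filter_upwards [hT, hS, hC] with y hyT hyS hyC
  have hD : DifferentiableOn ℂ (fun μ : ℂ => μ * f (μ • y)) (closedBall m ρ) := by
    refine differentiableOn_id.mul (hf.comp (by fun_prop) fun μ hμ => hVr (hyT μ hμ))
  have hopen : IsOpen {μ : ℂ | μ • y ∈ ball (0 : X) r} :=
    isOpen_ball.preimage (f := fun μ : ℂ => μ • y) (by fun_prop)
  have hsub := DiffContOnCl.ball_subset_image_closedBall (ε := c)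
    (f := fun μ : ℂ => μ * f (μ • y)) (z₀ := m) (r := ρ)
    (DifferentiableOn.diffContOnCl (hD.mono closure_ball_subset_closedBall)) hρ
    (fun μ hμ => (hyS μ hμ).le)
    (not_eventually.1 (aux_not_const hopen (hinj y) (hVr (hyT m hmm))))
  obtain ⟨μ, hμ, hμ1⟩ := hsub (show (1 : ℂ) ∈ _ by
    rw [mem_ball_iff_norm, norm_sub_rev]; exact hyC)
  refine ⟨μ • y, interior_subset (hyT μ hμ).1, hVr (hyT μ hμ), ?_⟩
  rw [smul_smul, mul_comm]
  simp only at hμ1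
  rw [hμ1, one_smul]


/-- **Univalence criterion.** Let `F(x) = f(x)·x` on the unit ball `𝔹` of a complex Banach
space `X`, with `f` holomorphic on `𝔹`, and let `0 < r ≤ 1`. Then `F` is biholomorphic on
`B_r` if and only if, for every `u` with `‖u‖ = 1`, the function `f_u(ζ) = ζ·f(ζu)` is
univalent (injective and holomorphic) on the disc `𝕌_r`. -/
theorem stmt0 {X : Type*} [NormedAddCommGroup X] [NormedSpace ℂ X] [CompleteSpace X]
    (r : ℝ) (hr : r ∈ Set.Ioc (0 : ℝ) 1)
    (f : X → ℂ) (hf : DifferentiableOn ℂ f (ball (0 : X) 1))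
    (F : X → X) (hF : ∀ x ∈ ball (0 : X) 1, F x = f x • x) :
    IsBiholoOn F (ball (0 : X) r) ↔
      ∀ u : X, ‖u‖ = 1 →
        DifferentiableOn ℂ (fun ζ : ℂ => ζ * f (ζ • u)) (ball (0 : ℂ) r) ∧
        Set.InjOn (fun ζ : ℂ => ζ * f (ζ • u)) (ball (0 : ℂ) r) := by
  obtain ⟨hr0, hr1⟩ := hr
  have hsub : ball (0 : X) r ⊆ ball 0 1 := ball_subset_ball hr1
  have hfr : DifferentiableOn ℂ f (ball (0 : X) r) := hf.mono hsub
  have hmem : ∀ u : X, ‖u‖ = 1 → ∀ ζ ∈ ball (0 : ℂ) r, ζ • u ∈ ball (0 : X) r := by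
    intro u hu ζ hζ
    simpa [norm_smul, hu] using hζ
  have hFd : DifferentiableOn ℂ F (ball (0 : X) r) :=
    (hfr.smul differentiableOn_id).congr fun x hx => hF x (hsub hx)
  constructor
  · rintro ⟨-, hi, -⟩ u hu
    refine ⟨differentiableOn_id.mul (hfr.comp (by fun_prop) fun ζ hζ => hmem u hu ζ hζ), ?_⟩
    intro a ha b hb hab
    have h1 := hmem u hu a ha
    have h2 := hmem u hu b hb
    have h3 := hi h1 h2 (by
      rw [hF _ (hsub h1), hF _ (hsub h2), smul_smul, smul_smul, mul_comm, mul_comm (f (b • u))]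
      exact congrArg (· • u) hab)
    have hu0 : u ≠ 0 := by
      rintro rfl
      simp at hu
    exact smul_left_injective ℂ hu0 h3
  · intro H
    rcases subsingleton_or_nontrivial X with hs | hs
    · exact ⟨hFd, fun _ _ _ _ _ => Subsingleton.elim _ _, id, differentiableOn_id,
        fun _ _ => Subsingleton.elim _ _⟩
    -- every nonzero vector as a multiple of a unit vector
    have hunit : ∀ y : X, y ≠ 0 → ∃ u : X, ‖u‖ = 1 ∧ y = (‖y‖ : ℂ) • u := by
      intro y hy
      have hn : (‖y‖ : ℂ) ≠ 0 := by simpa using hy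
      refine ⟨(‖y‖ : ℂ)⁻¹ • y, ?_, ?_⟩
      · rw [norm_smul, norm_inv, Complex.norm_real, norm_norm,
          inv_mul_cancel₀ (norm_ne_zero_iff.2 hy)]
      · rw [smul_smul, mul_inv_cancel₀ hn, one_smul]
    have hf0 : f 0 ≠ 0 := by
      obtain ⟨y, hy⟩ := exists_ne (0 : X)
      obtain ⟨u, hu, -⟩ := hunit y hy
      have h1 := aux_deriv_ne isOpen_ball (H u hu).1 (H u hu).2 (mem_ball_self hr0)
      have hfu : DifferentiableAt ℂ (fun ζ : ℂ => f (ζ • u)) 0 := by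
        have h2 : DifferentiableAt ℂ f ((0 : ℂ) • u) := by
          rw [zero_smul]
          exact hfr.differentiableAt (ball_mem_nhds _ hr0)
        exact DifferentiableAt.comp (f := fun ζ : ℂ => ζ • u) 0 h2 (by fun_prop)
      have h3 := ((hasDerivAt_id (0 : ℂ)).mul hfu.hasDerivAt).deriv
      intro h0
      apply h1
      simp only [id, zero_smul, h0, mul_zero, zero_mul, add_zero] at h3
      exact h3
    have hinj : ∀ y : X,
        InjOn (fun μ : ℂ => μ * f (μ • y)) {μ : ℂ | μ • y ∈ ball (0 : X) r} := by
      intro y a ha b hb hab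
      rcases eq_or_ne y 0 with rfl | hy
      · simp only [smul_zero] at hab
        exact mul_right_cancel₀ hf0 hab
      · obtain ⟨u, hu, hyu⟩ := hunit y hy
        have hn : (‖y‖ : ℂ) ≠ 0 := by simpa using hy
        have hmem' : ∀ c : ℂ, c • y ∈ ball (0 : X) r → c * ‖y‖ ∈ ball (0 : ℂ) r := by
          intro c hc
          simpa [norm_smul] using hc
        have key : ∀ c : ℂ, (c * ‖y‖) • u = c • y := by
          intro c
          rw [mul_smul, ← hyu]
        have := (H u hu).2 (hmem' a ha) (hmem' b hb) (by
          simp only [key]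
          simp only at hab
          rw [mul_right_comm, hab, mul_right_comm])
        exact mul_right_cancel₀ hn this
    have hne : ∀ x ∈ ball (0 : X) r, f x ≠ 0 := by
      intro x hx h0
      have := hinj x (x₁ := 1) (x₂ := 0) (by simpa using hx) (by simpa using hr0) (by simp [h0])
      exact one_ne_zero this
    have hFi : InjOn F (ball (0 : X) r) := by
      intro x hx y hy hxy
      rw [hF x (hsub hx), hF y (hsub hy)] at hxy
      have hyx : y = ((f y)⁻¹ * f x) • x := by
        rw [mul_smul, hxy, smul_smul, inv_mul_cancel₀ (hne y hy), one_smul]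
      set t := (f y)⁻¹ * f x with ht
      have h1 := hinj x (x₁ := 1) (x₂ := t) (by simpa using hx)
        (by change t • x ∈ ball (0 : X) r; rw [← hyx]; exact hy) (by
          simp only [one_smul, one_mul, ← hyx]
          rw [ht, mul_right_comm, inv_mul_cancel₀ (hne y hy), one_mul])
      rw [hyx, ← h1, one_smul]
    set g := Function.invFunOn F (ball (0 : X) r) with hg
    have hleft : ∀ x ∈ ball (0 : X) r, g (F x) = x := fun x hx => hFi.leftInvOn_invFunOn hx
    refine ⟨hFd, hFi, g, ?_, hleft⟩
    rintro _ ⟨x, hx, rfl⟩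
    have hop : ∀ U ∈ 𝓝 x, ∀ᶠ y in 𝓝 (F x), ∃ z ∈ U, z ∈ ball (0 : X) r ∧ F z = y := by
      intro U hU
      rw [hF x (hsub hx)]
      filter_upwards [aux_open f hfr hne hinj hx hU] with y hy
      obtain ⟨z, hz, hzr, h⟩ := hy
      exact ⟨z, hz, hzr, by rw [hF z (hsub hzr), h]⟩
    have hcont : ContinuousAt g (F x) := by
      intro U hU
      rw [hleft x hx] at hU
      rw [mem_map]
      filter_upwards [hop U hU] with y hy
      obtain ⟨z, hz, hzr, rfl⟩ := hy
      rw [mem_preimage, hleft z hzr]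
      exact hz
    have hright : ∀ᶠ y in 𝓝 (F x), F (g y) = y := by
      filter_upwards [hop univ univ_mem] with y hy
      obtain ⟨z, hz, hzr, rfl⟩ := hy
      rw [hleft z hzr]
    have hfx := (hfr.differentiableAt (isOpen_ball.mem_nhds hx)).hasFDerivAt
    set L := fderiv ℂ f x with hL
    have hb : f x + L x ≠ 0 := by
      have hopen : IsOpen {μ : ℂ | μ • x ∈ ball (0 : X) r} :=
        isOpen_ball.preimage (f := fun μ : ℂ => μ • x) (by fun_prop)
      have h1 := aux_deriv_ne hopen
        (differentiableOn_id.mul (hfr.comp (by fun_prop) fun μ hμ => hμ)) (hinj x)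
        (z := 1) (by simpa using hx)
      have h2 : HasDerivAt (fun μ : ℂ => μ • x) x 1 := by
        simpa using (hasDerivAt_id (1 : ℂ)).smul_const x
      have h3 : HasDerivAt (fun μ : ℂ => f (μ • x)) (L x) 1 :=
        HasFDerivAt.comp_hasDerivAt (f := fun μ : ℂ => μ • x) (1 : ℂ)
          (by rw [one_smul]; exact hfx) h2
      have h4 := ((hasDerivAt_id (1 : ℂ)).mul h3).deriv
      simp only [id, one_smul, one_mul] at h4
      rw [← h4]
      exact h1
    obtain ⟨e, he⟩ := aux_equiv (f x) L x (hne x hx) hb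
    have hFx : HasFDerivAt F (e : X →L[ℂ] X) x := by
      rw [he]
      refine (hfx.smul (hasFDerivAt_id x)).congr_of_eventuallyEq ?_
      filter_upwards [isOpen_ball.mem_nhds hx] with z hz
      exact hF z (hsub hz)
    exact (HasFDerivAt.of_local_left_inverse hcont (by rw [hleft x hx]; exact hFx)
      hright).differentiableAt.differentiableWithinAt
end
end

section
/- Let r ∈ (0,1] and let f : 𝔹 → ℂ be holomorphic and F(x) = f(x)·x for x ∈ 𝔹. Then F is starlike on B_r if and only if for every u ∈ X with ‖u‖ = 1 the function f_u(ζ) = ζ·f(ζu) is starlike on 𝕌_r. -/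
open Metric Set

noncomputable section

/-- `f` is starlike on `s` if `f 0 = 0`, `f` is biholomorphic on `s` and the image `f '' s`
is starlike with respect to the origin. -/
def IsStarlikeOn {E₁ E₂ : Type*} [NormedAddCommGroup E₁] [NormedSpace ℂ E₁]
    [NormedAddCommGroup E₂] [NormedSpace ℂ E₂] (f : E₁ → E₂) (s : Set E₁) : Prop :=
  IsBiholoOn f s ∧ f 0 = 0 ∧
    ∀ w ∈ f '' s, ∀ t ∈ Set.Icc (0 : ℝ) 1, t • w ∈ f '' s


theorem cauchy_fderiv_bound {X : Type*} [NormedAddCommGroup X] [NormedSpace ℂ X]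
    (h : X → ℂ) (x : X) (δ C : ℝ) (hδ : 0 < δ) (hC : 0 ≤ C)
    (hd : DifferentiableOn ℂ h (ball x δ)) (hb : ∀ y ∈ ball x δ, ‖h y‖ ≤ C) :
    ‖fderiv ℂ h x‖ ≤ C * 2 / δ := by
  refine ContinuousLinearMap.opNorm_le_bound _ (by positivity) fun v => ?_
  by_cases hv : v = 0
  · simp [hv]
  have hv' : 0 < ‖v‖ := norm_pos_iff.2 hv
  have hR : 0 < δ / (2 * ‖v‖) := by positivity
  have hmem : ∀ z ∈ closedBall (0 : ℂ) (δ / (2 * ‖v‖)), x + z • v ∈ ball x δ := by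
    intro z hz
    rw [mem_closedBall_zero_iff, le_div_iff₀ (by positivity)] at hz
    rw [mem_ball_iff_norm, add_sub_cancel_left, norm_smul]
    linarith
  have hda : ∀ z ∈ closedBall (0 : ℂ) (δ / (2 * ‖v‖)),
      DifferentiableAt ℂ (fun z : ℂ => h (x + z • v)) z := by
    intro z hz
    have h1 : DifferentiableAt ℂ h (x + z • v) :=
      (hd _ (hmem z hz)).differentiableAt (isOpen_ball.mem_nhds (hmem z hz))
    exact h1.comp z (f := fun z : ℂ => x + z • v) (by fun_prop)
  have h0 : HasDerivAt (fun z : ℂ => h (x + z • v)) (fderiv ℂ h x v) 0 := by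
    have h1 : HasFDerivAt h (fderiv ℂ h x) (x + (0 : ℂ) • v) := by
      have : DifferentiableAt ℂ h x :=
        (hd x (mem_ball_self hδ)).differentiableAt (ball_mem_nhds x hδ)
      simpa using this.hasFDerivAt
    have h2 : HasDerivAt (fun z : ℂ => x + z • v) v 0 := by
      simpa using ((hasDerivAt_id (0 : ℂ)).smul_const v).const_add x
    exact h1.comp_hasDerivAt (0 : ℂ) h2
  have hcl : DiffContOnCl ℂ (fun z : ℂ => h (x + z • v)) (ball 0 (δ / (2 * ‖v‖))) := by
    apply DifferentiableOn.diffContOnCl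
    rw [closure_ball _ hR.ne']
    exact fun z hz => (hda z hz).differentiableWithinAt
  have := Complex.norm_deriv_le_of_forall_mem_sphere_norm_le hR hcl
    (C := C) (fun z hz => hb _ (hmem z (sphere_subset_closedBall hz)))
  rw [h0.deriv] at this
  refine this.trans (le_of_eq ?_)
  field_simp

theorem holo_strict {X : Type*} [NormedAddCommGroup X] [NormedSpace ℂ X]
    (h : X → ℂ) (s : Set X) (hs : IsOpen s) (hd : DifferentiableOn ℂ h s) (x : X) (hx : x ∈ s) :
    HasStrictFDerivAt h (fderiv ℂ h x) x := by
  have hda : ∀ y ∈ s, HasFDerivAt h (fderiv ℂ h y) y := fun y hy =>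
    ((hd y hy).differentiableAt (hs.mem_nhds hy)).hasFDerivAt
  refine hasStrictFDerivAt_of_hasFDerivAt_of_continuousAt
    (f' := fderiv ℂ h) (Filter.eventually_of_mem (hs.mem_nhds hx) hda) ?_
  rw [Metric.continuousAt_iff]
  intro ε hε
  have h1 := (hasFDerivAt_iff_isLittleO.1 (hda x hx)).def (show 0 < ε / 8 by positivity)
  obtain ⟨δ, hδ, hball⟩ := Metric.eventually_nhds_iff_ball.1 (h1.and (hs.mem_nhds hx))
  refine ⟨δ / 2, by positivity, fun {y} hy => ?_⟩
  have hsub : ball y (δ / 2) ⊆ ball x δ := ball_subset_ball' (by linarith)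
  have hks : ∀ z ∈ s, HasFDerivAt (fun z => h z - h x - fderiv ℂ h x (z - x))
      (fderiv ℂ h z - fderiv ℂ h x) z := by
    intro z hz
    have e1 : HasFDerivAt (fun z => fderiv ℂ h x (z - x)) (fderiv ℂ h x) z := by
      exact (fderiv ℂ h x).hasFDerivAt.comp z ((hasFDerivAt_id z).sub_const x)
    exact ((hda z hz).sub_const (h x)).sub e1
  have hyy : y ∈ ball y (δ / 2) := mem_ball_self (by positivity)
  have key := cauchy_fderiv_bound (fun z => h z - h x - fderiv ℂ h x (z - x)) y (δ / 2)
    (ε / 8 * δ) (by positivity) (by positivity)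
    (fun z hz => (hks z (hball z (hsub hz)).2).differentiableAt.differentiableWithinAt)
    (fun z hz => by
      have hz' := hsub hz
      refine (hball z hz').1.trans ?_
      gcongr
      exact (mem_ball_iff_norm.1 hz').le)
  rw [(hks y (hball y (hsub hyy)).2).fderiv] at key
  rw [dist_eq_norm]
  refine key.trans_lt ?_
  have : ε / 8 * δ * 2 / (δ / 2) = ε / 2 := by field_simp; norm_num
  linarith

theorem biholo_deriv_ne_zero (φ : ℂ → ℂ) (s : Set ℂ) (hs : IsOpen s) (hφ : IsBiholoOn φ s)
    (z d : ℂ) (hz : z ∈ s) (hd : HasDerivAt φ d z) : d ≠ 0 := by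
  obtain ⟨-, -, g, hg, hgf⟩ := hφ
  rintro rfl
  have h1 := (hg (φ z) (mem_image_of_mem φ hz)).hasFDerivWithinAt.comp_hasDerivWithinAt z
    (hd.hasDerivWithinAt (s := s)) (mapsTo_image φ s)
  have h2 : HasDerivAt (g ∘ φ) 0 z := by simpa using h1.hasDerivAt (hs.mem_nhds hz)
  have h3 : HasDerivAt (g ∘ φ) 1 z := (hasDerivAt_id z).congr_of_eventuallyEq
    (Filter.eventually_of_mem (hs.mem_nhds hz) hgf)
  exact zero_ne_one (h2.unique h3)

theorem hasDeriv_slice {X : Type*} [NormedAddCommGroup X] [NormedSpace ℂ X]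
    (f : X → ℂ) (hf : DifferentiableOn ℂ f (ball (0 : X) 1)) (u : X) (z : ℂ)
    (hz : z • u ∈ ball (0 : X) 1) :
    HasDerivAt (fun ζ : ℂ => ζ * f (ζ • u)) (f (z • u) + fderiv ℂ f (z • u) (z • u)) z := by
  have h1 : HasFDerivAt f (fderiv ℂ f (z • u)) (z • u) :=
    ((hf _ hz).differentiableAt (isOpen_ball.mem_nhds hz)).hasFDerivAt
  have h2 : HasDerivAt (fun z : ℂ => z • u) u z := by
    simpa using (hasDerivAt_id z).smul_const u
  have h3 := (hasDerivAt_id z).mul (h1.comp_hasDerivAt z h2)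
  refine h3.congr_deriv ?_
  simp

theorem equiv_rank_one {X : Type*} [NormedAddCommGroup X] [NormedSpace ℂ X]
    (a : ℂ) (l : X →L[ℂ] ℂ) (x : X) (ha : a ≠ 0) (hb : a + l x ≠ 0) :
    ∃ e : X ≃L[ℂ] X, (e : X →L[ℂ] X) = a • ContinuousLinearMap.id ℂ X + l.smulRight x := by
  refine ⟨ContinuousLinearEquiv.equivOfInverse (a • ContinuousLinearMap.id ℂ X + l.smulRight x)
    (a⁻¹ • ContinuousLinearMap.id ℂ X - (a⁻¹ * (a + l x)⁻¹) • l.smulRight x) ?_ ?_, ?_⟩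
  · intro v
    simp only [ContinuousLinearMap.add_apply, ContinuousLinearMap.sub_apply,
      ContinuousLinearMap.smul_apply, ContinuousLinearMap.id_apply,
      ContinuousLinearMap.smulRight_apply, map_add, map_smul, smul_eq_mul]
    match_scalars <;> field_simp
    ring
  · intro v
    simp only [ContinuousLinearMap.add_apply, ContinuousLinearMap.sub_apply,
      ContinuousLinearMap.smul_apply, ContinuousLinearMap.id_apply,
      ContinuousLinearMap.smulRight_apply, map_sub, map_smul, smul_eq_mul]
    match_scalars <;> field_simp
    ring
  · ext v
    simp

/-- Every point lies on a complex line through a unit vector. -/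
theorem exists_unit {X : Type*} [NormedAddCommGroup X] [NormedSpace ℂ X] [Nontrivial X] (x : X) :
    ∃ u : X, ‖u‖ = 1 ∧ ∃ z : ℂ, x = z • u ∧ ‖z‖ = ‖x‖ := by
  by_cases hx : x = 0
  · obtain ⟨y, hy⟩ := exists_ne (0 : X)
    have hy' : (‖y‖ : ℂ) ≠ 0 := by simpa using hy
    exact ⟨(‖y‖ : ℂ)⁻¹ • y, by rw [norm_smul]; simp [hy], 0, by simp [hx], by simp [hx]⟩
  · have hx' : (‖x‖ : ℂ) ≠ 0 := by simpa using hx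
    exact ⟨(‖x‖ : ℂ)⁻¹ • x, by rw [norm_smul]; simp [hx], ‖x‖, by simp [smul_smul, hx'], by simp⟩

/-- **Starlikeness criterion.** Let `F(x) = f(x)·x` on the unit ball `𝔹` of a complex Banach
space `X`, with `f` holomorphic on `𝔹`, and let `0 < r ≤ 1`. Then `F` is starlike on `B_r`
if and only if, for every `u` with `‖u‖ = 1`, the function `f_u(ζ) = ζ·f(ζu)` is starlike
on the disc `𝕌_r`. -/
theorem stmt1 {X : Type*} [NormedAddCommGroup X] [NormedSpace ℂ X] [CompleteSpace X]
    (r : ℝ) (hr : r ∈ Set.Ioc (0 : ℝ) 1)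
    (f : X → ℂ) (hf : DifferentiableOn ℂ f (ball (0 : X) 1))
    (F : X → X) (hF : ∀ x ∈ ball (0 : X) 1, F x = f x • x) :
    IsStarlikeOn F (ball (0 : X) r) ↔
      ∀ u : X, ‖u‖ = 1 →
        IsStarlikeOn (fun ζ : ℂ => ζ * f (ζ • u)) (ball (0 : ℂ) r) := by
  obtain ⟨hr0, hr1⟩ := hr
  have hsub : ball (0 : X) r ⊆ ball (0 : X) 1 := ball_subset_ball hr1
  have hmem : ∀ u : X, ‖u‖ = 1 → ∀ z : ℂ, z • u ∈ ball (0 : X) r ↔ z ∈ ball (0 : ℂ) r := by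
    intro u hu z
    simp [norm_smul, hu]
  have hFu : ∀ u : X, ‖u‖ = 1 → ∀ z ∈ ball (0 : ℂ) r, F (z • u) = (z * f (z • u)) • u := by
    intro u hu z hz
    rw [hF _ (hsub ((hmem u hu z).2 hz)), smul_smul, mul_comm]
  have hcancel : ∀ u : X, ‖u‖ = 1 → ∀ a b : ℂ, a • u = b • u → a = b := by
    intro u hu a b h
    have hu0 : u ≠ 0 := by
      rintro rfl
      simp at hu
    exact smul_left_injective ℂ hu0 h
  have h00 : F 0 = 0 := by rw [hF 0 (mem_ball_self one_pos), smul_zero]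
  constructor
  · rintro ⟨⟨-, hinj, g, hg, hgF⟩, -, hstar⟩ u hu
    have hu0 : ‖u‖ ≠ 0 := by rw [hu]; exact one_ne_zero
    refine ⟨⟨?_, ?_, ?_⟩, by simp, ?_⟩
    · intro z hz
      exact (hasDeriv_slice f hf u z
        (hsub ((hmem u hu z).2 hz))).differentiableAt.differentiableWithinAt
    · intro a ha b hb hab
      have : F (a • u) = F (b • u) := by
        rw [hFu u hu a ha, hFu u hu b hb]
        exact congrArg (· • u) hab
      exact hcancel u hu _ _ (hinj ((hmem u hu a).2 ha) ((hmem u hu b).2 hb) this)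
    · obtain ⟨l, -, hl⟩ := exists_dual_vector ℂ u hu0
      refine ⟨fun w => l (g (w • u)), ?_, ?_⟩
      · have h1 : DifferentiableOn ℂ (fun w : ℂ => g (w • u))
            ((fun ζ : ℂ => ζ * f (ζ • u)) '' ball (0 : ℂ) r) := by
          refine hg.comp (f := fun w : ℂ => w • u) (by fun_prop) ?_
          rintro _ ⟨z, hz, rfl⟩
          exact ⟨z • u, (hmem u hu z).2 hz, hFu u hu z hz⟩
        exact l.differentiable.comp_differentiableOn h1
      · intro z hz
        have : g ((z * f (z • u)) • u) = z • u := by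
          rw [← hFu u hu z hz]
          exact hgF _ ((hmem u hu z).2 hz)
        simp [this, hl, hu]
    · rintro _ ⟨z, hz, rfl⟩ t ht
      by_cases h0 : t • (z * f (z • u)) = 0
      · exact ⟨0, mem_ball_self hr0, by simp only [h0, zero_mul]⟩
      · obtain ⟨y, hy, hyw⟩ := hstar _ (mem_image_of_mem F ((hmem u hu z).2 hz)) t ht
        rw [hFu u hu z hz, hF y (hsub hy), ← smul_assoc] at hyw
        have hfy : f y ≠ 0 := by
          intro h
          rw [h, zero_smul] at hyw
          refine h0 (hcancel u hu _ _ ?_)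
          rw [← hyw, zero_smul]
        have hyu : y = ((f y)⁻¹ * (t • (z * f (z • u)))) • u := by
          rw [mul_smul, ← hyw, inv_smul_smul₀ hfy]
        generalize ((f y)⁻¹ * (t • (z * f (z • u)))) = b at hyu
        subst hyu
        have hb := (hmem u hu b).1 hy
        refine ⟨b, hb, hcancel u hu _ _ ?_⟩
        rw [← hyw, smul_smul, mul_comm]
  · intro H
    rcases subsingleton_or_nontrivial X with hX | hX
    · refine ⟨⟨fun x _ => ?_, fun x _ y _ _ => Subsingleton.elim _ _, id, ?_, ?_⟩, h00, ?_⟩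
      · have : F = fun x => x := Subsingleton.elim _ _
        rw [this]
        exact differentiableWithinAt_id
      · exact differentiableOn_id
      · exact fun x _ => Subsingleton.elim _ _
      · intro w _ t _
        exact ⟨0, mem_ball_self hr0, Subsingleton.elim _ _⟩
    have hD : ∀ x ∈ ball (0 : X) r, f x + fderiv ℂ f x x ≠ 0 := by
      intro x hx
      obtain ⟨u, hu, z, rfl, -⟩ := exists_unit x
      exact biholo_deriv_ne_zero _ _ isOpen_ball (H u hu).1 z _ ((hmem u hu z).1 hx)
        (hasDeriv_slice f hf u z (hsub hx))
    have hf0 : ∀ x ∈ ball (0 : X) r, f x ≠ 0 := by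
      intro x hx h
      by_cases hx0 : x = 0
      · have := hD x hx
        subst hx0
        simp [h] at this
      · obtain ⟨u, hu, z, rfl, -⟩ := exists_unit x
        have : z = 0 := (H u hu).1.2.1 ((hmem u hu z).1 hx) (mem_ball_self hr0) (by simp [h])
        exact hx0 (by simp [this])
    have hinj : InjOn F (ball (0 : X) r) := by
      intro x hx y hy hxy
      obtain ⟨u, hu, z, rfl, -⟩ := exists_unit x
      have hz := (hmem u hu z).1 hx
      have hxy' := hxy
      rw [hFu u hu z hz, hF y (hsub hy)] at hxy'
      have hyu : y = ((f y)⁻¹ * (z * f (z • u))) • u := by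
        rw [mul_smul, hxy', inv_smul_smul₀ (hf0 y hy)]
      generalize ((f y)⁻¹ * (z * f (z • u))) = b at hyu
      subst hyu
      have hb := (hmem u hu b).1 hy
      rw [hFu u hu z hz, hFu u hu b hb] at hxy
      rw [(H u hu).1.2.1 hz hb (hcancel u hu _ _ hxy)]
    have hstrict : ∀ x ∈ ball (0 : X) r, ∃ e : X ≃L[ℂ] X,
        HasStrictFDerivAt F (e : X →L[ℂ] X) x := by
      intro x hx
      obtain ⟨e, he⟩ := equiv_rank_one (f x) (fderiv ℂ f x) x (hf0 x hx) (hD x hx)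
      refine ⟨e, ?_⟩
      rw [he]
      have h1 := (holo_strict f _ isOpen_ball hf x (hsub hx)).smul (hasStrictFDerivAt_id x)
      refine h1.congr_of_eventuallyEq ?_
      filter_upwards [isOpen_ball.mem_nhds (hsub hx)] with y hy
      exact (hF y hy).symm
    have hgl : ∀ x ∈ ball (0 : X) r, Function.invFunOn F (ball (0 : X) r) (F x) = x :=
      fun x hx => hinj.leftInvOn_invFunOn hx
    refine ⟨⟨?_, hinj, Function.invFunOn F (ball (0 : X) r), ?_, hgl⟩, h00, ?_⟩
    · intro x hx
      obtain ⟨e, he⟩ := hstrict x hx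
      exact he.hasFDerivAt.differentiableAt.differentiableWithinAt
    · rintro _ ⟨x, hx, rfl⟩
      obtain ⟨e, he⟩ := hstrict x hx
      refine (he.to_local_left_inverse
        (Filter.eventually_of_mem (isOpen_ball.mem_nhds hx) hgl)).hasFDerivAt.differentiableAt.differentiableWithinAt
    · rintro _ ⟨x, hx, rfl⟩ t ht
      obtain ⟨u, hu, z, rfl, -⟩ := exists_unit x
      have hz := (hmem u hu z).1 hx
      obtain ⟨b, hb, hbw⟩ := (H u hu).2.2 _ (mem_image_of_mem _ hz) t ht
      refine ⟨b • u, (hmem u hu b).2 hb, ?_⟩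
      rw [hFu u hu b hb, hFu u hu z hz, ← smul_assoc]
      exact congrArg (· • u) hbw
end
end

section
/- Let r ∈ (0,1] and let f : 𝔹 → ℂ be holomorphic with f(0) = 1, and F(x) = f(x)·x for x ∈ 𝔹. Then the following are equivalent: (a) for every x ∈ B_r \ {0} the Fréchet derivative DF(x) is invertible and Re l_x([DF(x)]⁻¹(D²F(x)(x,x) + DF(x)x)) > 0 for every l_x ∈ T(x); (b) for every u ∈ X with ‖u‖ = 1 the function f_u(ζ) = ζ·f(ζu) is convex on 𝕌_r (i.e., injective holomorphic with f_u(𝕌_r) convex). -/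
open Metric Set

noncomputable section

open Filter Topology
open scoped ComplexConjugate


lemma rem_est {X : Type*} [NormedAddCommGroup X] [NormedSpace ℂ X] {f : X → ℂ} {y : X} {δ M : ℝ}
    (hδ : 0 < δ) (hf : DifferentiableOn ℂ f (ball y δ)) (hM : ∀ z ∈ ball y δ, ‖f z‖ ≤ M) :
    ‖fderiv ℂ f y‖ ≤ 2 * M / δ ∧ ∀ k : X, ‖k‖ < δ →
      ‖f (y + k) - f y - fderiv ℂ f y k‖ ≤ 4 * M * (‖k‖ / δ) ^ 2 := by
  have hy : y ∈ ball y δ := mem_ball_self hδ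
  have h1 : ‖fderiv ℂ f y‖ ≤ 2 * M / δ := by
    refine Complex.norm_fderiv_le_div_of_mapsTo_ball hf ?_ hδ
    intro z hz
    rw [mem_closedBall, dist_eq_norm]
    have := norm_sub_le (f z) (f y)
    linarith [hM z hz, hM y hy]
  refine ⟨h1, fun k hk => ?_⟩
  set φ : X → ℂ := fun z => f z - fderiv ℂ f y (z - y) with hφ
  have hφy : φ y = f y := by simp [hφ]
  have hdf : DifferentiableAt ℂ f y := hf.differentiableAt (isOpen_ball.mem_nhds hy)
  have := Complex.dist_le_mul_div_pow_of_mapsTo_ball_of_isLittleO (f := φ) (c := y) (R₁ := δ)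
    (R₂ := 4 * M) (n := 1) (z := y + k) ?_ ?_ ?_ ?_
  · rw [dist_eq_norm, hφy] at this
    simp only [hφ] at this
    rw [dist_eq_norm] at this
    simp only [add_sub_cancel_left] at this
    rw [sub_right_comm]
    exact this
  · exact hf.sub (by fun_prop)
  · intro z hz
    rw [mem_closedBall, dist_eq_norm, hφy]
    simp only [hφ]
    have e1 : ‖fderiv ℂ f y (z - y)‖ ≤ 2 * M := by
      have hz' : ‖z - y‖ ≤ δ := by rw [← dist_eq_norm]; exact (mem_ball.1 hz).le
      calc _ ≤ ‖fderiv ℂ f y‖ * ‖z - y‖ := ContinuousLinearMap.le_opNorm _ _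
        _ ≤ (2 * M / δ) * δ := by gcongr; exact (norm_nonneg _).trans h1
        _ = 2 * M := by field_simp
    have e2 := norm_sub_le (f z - fderiv ℂ f y (z - y)) (f y)
    have e3 := norm_sub_le (f z) (fderiv ℂ f y (z - y))
    linarith [hM z hz, hM y hy]
  · have := hdf.hasFDerivAt.isLittleO
    simp only [hφ, sub_self, map_zero, sub_zero, pow_one]
    refine (this.congr_left ?_).norm_right
    intro z; ring
  · simpa [dist_eq_norm] using hk

lemma zero_of_sq {a C s₀ : ℝ} (hs : 0 < s₀) (ha : 0 ≤ a)
    (h : ∀ s, 0 < s → s < s₀ → s * a ≤ C * s ^ 2) : a = 0 := by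
  by_contra hne
  have hapos : 0 < a := lt_of_le_of_ne ha (Ne.symm hne)
  have h1 : ∀ s, 0 < s → s < s₀ → a ≤ C * s := by
    intro s h0 h1
    have := h s h0 h1
    have h2 : s * a ≤ s * (C * s) := by nlinarith
    exact le_of_mul_le_mul_left h2 h0
  have hC : 0 < C := by
    have := h1 (s₀ / 2) (by linarith) (by linarith)
    by_contra hC
    nlinarith
  set s := min (s₀ / 2) (a / (2 * C))
  have hs1 : 0 < s := by positivity
  have hs2 : s < s₀ := lt_of_le_of_lt (min_le_left _ _) (by linarith)
  have := h1 s hs1 hs2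
  have h3 : s ≤ a / (2 * C) := min_le_right _ _
  have : C * s ≤ a / 2 := by
    calc C * s ≤ C * (a / (2 * C)) := by gcongr
      _ = a / 2 := by field_simp
  linarith

lemma fderiv_diff {X : Type*} [NormedAddCommGroup X] [NormedSpace ℂ X] {f : X → ℂ} {U : Set X}
    (hU : IsOpen U) (hf : DifferentiableOn ℂ f U) {x : X} (hx : x ∈ U) :
    DifferentiableAt ℂ (fderiv ℂ f) x := by
  obtain ⟨M, δ, hδ, hsub, hM⟩ : ∃ M δ : ℝ, 0 < δ ∧ ball x (2 * δ) ⊆ U ∧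
      ∀ z ∈ ball x (2 * δ), ‖f z‖ ≤ M := by
    have hc : ContinuousAt f x := (hf.differentiableAt (hU.mem_nhds hx)).continuousAt
    have h1 : ∀ᶠ z in 𝓝 x, ‖f z‖ < ‖f x‖ + 1 := hc.norm.eventually_lt_const (by linarith)
    obtain ⟨ε, hε, h⟩ := Metric.mem_nhds_iff.1 (inter_mem h1 (hU.mem_nhds hx))
    refine ⟨‖f x‖ + 1, ε / 2, by linarith, ?_, ?_⟩
    · rw [mul_div_cancel₀ _ (by norm_num)]; exact fun z hz => (h hz).2
    · rw [mul_div_cancel₀ _ (by norm_num)]; exact fun z hz => (h hz).1.le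
  have hM0 : 0 ≤ M := (norm_nonneg _).trans (hM x (mem_ball_self (by linarith)))
  have hfd : ∀ z ∈ ball x (2 * δ), DifferentiableAt ℂ f z := fun z hz =>
    hf.differentiableAt (hU.mem_nhds (hsub hz))
  have hbb : ∀ y ∈ ball x δ, ball y δ ⊆ ball x (2 * δ) := by
    intro y hy z hz
    rw [mem_ball] at *
    linarith [dist_triangle z y x]
  have hE : ∀ y ∈ ball x δ, ‖fderiv ℂ f y‖ ≤ 2 * M / δ ∧ ∀ k : X, ‖k‖ < δ →
      ‖f (y + k) - f y - fderiv ℂ f y k‖ ≤ 4 * M * (‖k‖ / δ) ^ 2 := fun y hy =>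
    rem_est hδ (hf.mono ((hbb y hy).trans hsub)) (fun z hz => hM z (hbb y hy hz))
  have hmem : ∀ h : X, h ≠ 0 → ∀ t ∈ ball (0 : ℂ) (δ / ‖h‖), x + t • h ∈ ball x δ := by
    intro h hh t ht
    have : 0 < ‖h‖ := norm_pos_iff.2 hh
    rw [mem_ball_zero_iff, lt_div_iff₀ this] at ht
    simpa [dist_eq_norm, norm_smul] using ht
  have hmem2 : ∀ h : X, h ≠ 0 → ∀ t ∈ ball (0 : ℂ) (δ / ‖h‖), ∀ k : X, ‖k‖ < δ →
      x + t • h + k ∈ ball x (2 * δ) := by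
    intro h hh t ht k hk
    exact hbb _ (hmem h hh t ht) (by simpa [dist_eq_norm] using hk)
  -- c1
  have c1s : ∀ h : X, h ≠ 0 → ∀ k : X, ‖k‖ < δ →
      DifferentiableOn ℂ (fun t : ℂ => fderiv ℂ f (x + t • h) k) (ball 0 (δ / ‖h‖)) := by
    intro h hh k hk
    have hlim : TendstoUniformlyOn (fun (n : ℕ) (t : ℂ) =>
        ((n : ℂ) + 1) * (f (x + t • h + ((n : ℂ) + 1)⁻¹ • k) - f (x + t • h)))
        (fun t : ℂ => fderiv ℂ f (x + t • h) k) atTop (ball 0 (δ / ‖h‖)) := by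
      rw [Metric.tendstoUniformlyOn_iff]
      intro ε hε
      have htend : Tendsto (fun n : ℕ => (4 * M * (‖k‖ / δ) ^ 2) * (1 / ((n : ℝ) + 1))) atTop
          (𝓝 ((4 * M * (‖k‖ / δ) ^ 2) * 0)) :=
        tendsto_one_div_add_atTop_nhds_zero_nat.const_mul _
      rw [mul_zero] at htend
      filter_upwards [htend.eventually_lt_const hε] with n hn t ht
      have hn1 : (0 : ℝ) < (n : ℝ) + 1 := by positivity
      have hnorm : ‖((n : ℂ) + 1)‖ = (n : ℝ) + 1 := by
        have : ((n : ℂ) + 1) = (((n : ℝ) + 1 : ℝ) : ℂ) := by push_cast; rfl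
        rw [this, Complex.norm_real, Real.norm_of_nonneg hn1.le]
      have hne : ((n : ℂ) + 1) ≠ 0 := by rw [← norm_pos_iff, hnorm]; exact hn1
      have hk' : ‖((n : ℂ) + 1)⁻¹ • k‖ = ‖k‖ / ((n : ℝ) + 1) := by
        rw [norm_smul, norm_inv, hnorm]; field_simp
      have hk2 : ‖((n : ℂ) + 1)⁻¹ • k‖ < δ := by
        rw [hk']
        refine lt_of_le_of_lt (div_le_self (norm_nonneg _) ?_) hk
        linarith [Nat.cast_nonneg (α := ℝ) n]
      have := (hE _ (hmem h hh t ht)).2 _ hk2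
      rw [dist_comm, dist_eq_norm]
      have e : ((n : ℂ) + 1) * (f (x + t • h + ((n : ℂ) + 1)⁻¹ • k) - f (x + t • h))
          - fderiv ℂ f (x + t • h) k = ((n : ℂ) + 1) *
          (f (x + t • h + ((n : ℂ) + 1)⁻¹ • k) - f (x + t • h)
            - fderiv ℂ f (x + t • h) (((n : ℂ) + 1)⁻¹ • k)) := by
        rw [map_smul, smul_eq_mul]; field_simp
      rw [e, norm_mul, hnorm]
      refine lt_of_le_of_lt ?_ hn
      calc ((n : ℝ) + 1) * _ ≤ ((n : ℝ) + 1) * (4 * M * (‖((n : ℂ) + 1)⁻¹ • k‖ / δ) ^ 2) := by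
            gcongr
        _ = _ := by rw [hk']; field_simp
    refine hlim.tendstoLocallyUniformlyOn.differentiableOn (Eventually.of_forall fun n => ?_)
      isOpen_ball
    intro t ht
    have hn1 : (0 : ℝ) < (n : ℝ) + 1 := by positivity
    have hnorm : ‖((n : ℂ) + 1)‖ = (n : ℝ) + 1 := by
      have : ((n : ℂ) + 1) = (((n : ℝ) + 1 : ℝ) : ℂ) := by push_cast; rfl
      rw [this, Complex.norm_real, Real.norm_of_nonneg hn1.le]
    have hk2 : ‖((n : ℂ) + 1)⁻¹ • k‖ < δ := by
      rw [norm_smul, norm_inv, hnorm, ← div_eq_inv_mul]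
      refine lt_of_le_of_lt (div_le_self (norm_nonneg _) ?_) hk
      linarith [Nat.cast_nonneg (α := ℝ) n]
    refine DifferentiableAt.differentiableWithinAt ?_
    refine DifferentiableAt.const_mul (DifferentiableAt.sub ?_ ?_) _
    · exact DifferentiableAt.comp (g := f) t (hfd _ (hmem2 h hh t ht _ hk2)) (by fun_prop)
    · have := hmem2 h hh t ht 0 (by simpa using hδ)
      rw [add_zero] at this
      exact DifferentiableAt.comp (g := f) t (hfd _ this) (by fun_prop)
  have c1 : ∀ h : X, h ≠ 0 → ∀ k : X,
      DifferentiableOn ℂ (fun t : ℂ => fderiv ℂ f (x + t • h) k) (ball 0 (δ / ‖h‖)) := by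
    intro h hh k
    obtain ⟨c, hc, hck⟩ : ∃ c : ℂ, c ≠ 0 ∧ ‖c • k‖ < δ := by
      refine ⟨((δ / (‖k‖ + 1) : ℝ) : ℂ), ?_, ?_⟩
      · have : 0 < δ / (‖k‖ + 1) := by positivity
        exact_mod_cast this.ne'
      · rw [norm_smul, Complex.norm_real, Real.norm_of_nonneg (by positivity), div_mul_eq_mul_div,
          div_lt_iff₀ (by positivity)]
        nlinarith [norm_nonneg k]
    have := (c1s h hh _ hck).const_mul c⁻¹
    refine this.congr fun t _ => ?_
    simp [hc]
  have c1' : ∀ h k : X, DifferentiableAt ℂ (fun t : ℂ => fderiv ℂ f (x + t • h) k) 0 := by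
    intro h k
    by_cases hh : h = 0
    · simp [hh]
    · have : 0 < δ / ‖h‖ := div_pos hδ (norm_pos_iff.2 hh)
      exact (c1 h hh k).differentiableAt (ball_mem_nhds _ this)
  set b : X → X → ℂ := fun k h => deriv (fun t : ℂ => fderiv ℂ f (x + t • h) k) 0 with hb
  have b0 : ∀ k, b k 0 = 0 := by intro k; simp [hb]
  have hxd : x ∈ ball x δ := mem_ball_self hδ
  have c2 : ∀ k h, ‖b k h‖ ≤ (4 * M / δ ^ 2) * ‖k‖ * ‖h‖ := by
    intro k h
    by_cases hh : h = 0
    · rw [hh, b0]; simp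
    · have hp : 0 < ‖h‖ := norm_pos_iff.2 hh
      have : ‖b k h‖ ≤ (4 * M / δ * ‖k‖) / (δ / ‖h‖) := by
        refine Complex.norm_deriv_le_div_of_mapsTo_ball (c1 h hh k) ?_ (by positivity)
        intro t ht
        rw [mem_closedBall, dist_eq_norm]
        have e1 := (fderiv ℂ f (x + t • h)).le_of_opNorm_le (hE _ (hmem h hh t ht)).1 k
        have e2 := (fderiv ℂ f (x + (0 : ℂ) • h)).le_of_opNorm_le
          (hE _ (hmem h hh 0 (mem_ball_self (by positivity)))).1 k
        refine (norm_sub_le _ _).trans ((add_le_add e1 e2).trans (le_of_eq ?_))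
        ring
      refine this.trans (le_of_eq ?_)
      field_simp
  have c3 : ∀ k h, ‖k‖ < δ → ‖fderiv ℂ f (x + k) h - fderiv ℂ f x h - b k h‖ ≤
      (8 * M / δ ^ 3) * ‖k‖ ^ 2 * ‖h‖ := by
    intro k h hk
    by_cases hh : h = 0
    · rw [hh, b0]; simp
    have hp : 0 < ‖h‖ := norm_pos_iff.2 hh
    set R : ℂ → ℂ := fun t => f (x + t • h + k) - f (x + t • h) - fderiv ℂ f (x + t • h) k with hR
    have hmem0 : ∀ t ∈ ball (0 : ℂ) (δ / ‖h‖), x + t • h ∈ ball x (2 * δ) := by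
      intro t ht
      have := hmem2 h hh t ht 0 (by simpa using hδ)
      rwa [add_zero] at this
    have hRd : DifferentiableOn ℂ R (ball 0 (δ / ‖h‖)) := by
      refine DifferentiableOn.sub (DifferentiableOn.sub ?_ ?_) (c1 h hh k)
      · intro t ht
        exact (DifferentiableAt.comp (g := f) t (hfd _ (hmem2 h hh t ht _ hk))
          (by fun_prop)).differentiableWithinAt
      · intro t ht
        exact (DifferentiableAt.comp (g := f) t (hfd _ (hmem0 t ht))
          (by fun_prop)).differentiableWithinAt
    have h0 : (0 : ℂ) ∈ ball (0 : ℂ) (δ / ‖h‖) := mem_ball_self (by positivity)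
    have hRb : ‖deriv R 0‖ ≤ (8 * M * (‖k‖ / δ) ^ 2) / (δ / ‖h‖) := by
      refine Complex.norm_deriv_le_div_of_mapsTo_ball hRd ?_ (by positivity)
      intro t ht
      rw [mem_closedBall, dist_eq_norm]
      have e1 := (hE _ (hmem h hh t ht)).2 k hk
      have e2 := (hE _ (hmem h hh 0 h0)).2 k hk
      refine (norm_sub_le _ _).trans ((add_le_add e1 e2).trans (le_of_eq ?_))
      ring
    have hRe : deriv R 0 = fderiv ℂ f (x + k) h - fderiv ℂ f x h - b k h := by
      have d1 : HasDerivAt (fun t : ℂ => x + t • h + k) h 0 := by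
        simpa using (((hasDerivAt_id (0 : ℂ)).smul_const h).const_add x).add_const k
      have d2 : HasDerivAt (fun t : ℂ => x + t • h) h 0 := by
        simpa using (((hasDerivAt_id (0 : ℂ)).smul_const h).const_add x)
      have m1 := hmem2 h hh 0 h0 k hk
      have m2 := hmem0 0 h0
      have D1 : HasDerivAt (fun t : ℂ => f (x + t • h + k)) (fderiv ℂ f (x + k) h) 0 := by
        have := HasFDerivAt.comp_hasDerivAt (l := f) (0 : ℂ) (hfd _ m1).hasFDerivAt d1
        simpa [Function.comp_def] using this
      have D2 : HasDerivAt (fun t : ℂ => f (x + t • h)) (fderiv ℂ f x h) 0 := by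
        have := HasFDerivAt.comp_hasDerivAt (l := f) (0 : ℂ) (hfd _ m2).hasFDerivAt d2
        simpa [Function.comp_def] using this
      exact ((D1.sub D2).sub (c1' h k).hasDerivAt).deriv
    rw [← hRe]
    refine hRb.trans (le_of_eq ?_)
    field_simp
  have c4a : ∀ k₁ k₂ h, b (k₁ + k₂) h = b k₁ h + b k₂ h := by
    intro k₁ k₂ h
    simp only [hb, map_add]
    exact deriv_fun_add (c1' h k₁) (c1' h k₂)
  have c4b : ∀ (c : ℂ) k h, b (c • k) h = c • b k h := by
    intro c k h
    simp only [hb, map_smul, smul_eq_mul]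
    exact deriv_const_mul c (c1' h k)
  have key : ∀ (k h₁ h₂ h₃ : X) (c₂ c₃ : ℂ), h₁ = c₂ • h₂ + c₃ • h₃ →
      b k h₁ = c₂ * b k h₂ + c₃ * b k h₃ := by
    intro k h₁ h₂ h₃ c₂ c₃ hh
    rw [← sub_eq_zero, ← norm_eq_zero]
    set K := (8 * M / δ ^ 3) with hK
    have hK0 : 0 ≤ K := by positivity
    refine zero_of_sq (s₀ := δ / (‖k‖ + 1))
      (C := K * ‖k‖ ^ 2 * (‖h₁‖ + ‖c₂‖ * ‖h₂‖ + ‖c₃‖ * ‖h₃‖)) (by positivity) (norm_nonneg _) ?_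
    intro s hs hs1
    have hsn : ‖(s : ℂ)‖ = s := by rw [Complex.norm_real, Real.norm_of_nonneg hs.le]
    have hsk : ‖(s : ℂ) • k‖ = s * ‖k‖ := by rw [norm_smul, hsn]
    have hsk1 : ‖(s : ℂ) • k‖ < δ := by
      rw [hsk]
      rw [lt_div_iff₀ (by positivity)] at hs1
      nlinarith [norm_nonneg k]
    have q1 := c3 _ h₁ hsk1
    have q2 := c3 _ h₂ hsk1
    have q3 := c3 _ h₃ hsk1
    rw [c4b, hsk] at q1 q2 q3
    set y := x + (s : ℂ) • k
    set a1 := fderiv ℂ f y h₁ - fderiv ℂ f x h₁ - (s : ℂ) • b k h₁ with ha1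
    set a2 := fderiv ℂ f y h₂ - fderiv ℂ f x h₂ - (s : ℂ) • b k h₂ with ha2
    set a3 := fderiv ℂ f y h₃ - fderiv ℂ f x h₃ - (s : ℂ) • b k h₃ with ha3
    have e : (s : ℂ) * (b k h₁ - (c₂ * b k h₂ + c₃ * b k h₃)) = c₂ * a2 + c₃ * a3 - a1 := by
      rw [ha1, ha2, ha3, hh]
      simp only [map_add, map_smul, smul_eq_mul]
      ring
    have en : s * ‖b k h₁ - (c₂ * b k h₂ + c₃ * b k h₃)‖ = ‖c₂ * a2 + c₃ * a3 - a1‖ := by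
      rw [← e, norm_mul, hsn]
    rw [en]
    have n1 := norm_sub_le (c₂ * a2 + c₃ * a3) a1
    have n2 := norm_add_le (c₂ * a2) (c₃ * a3)
    rw [norm_mul, norm_mul] at n2
    have m2 := mul_le_mul_of_nonneg_left q2 (norm_nonneg c₂)
    have m3 := mul_le_mul_of_nonneg_left q3 (norm_nonneg c₃)
    calc _ ≤ ‖c₂‖ * ‖a2‖ + ‖c₃‖ * ‖a3‖ + ‖a1‖ := by linarith
      _ ≤ _ := add_le_add (add_le_add m2 m3) q1
      _ = _ := by ring
  have c5a : ∀ k h₁ h₂, b k (h₁ + h₂) = b k h₁ + b k h₂ := by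
    intro k h₁ h₂
    have := key k (h₁ + h₂) h₁ h₂ 1 1 (by simp)
    simpa using this
  have c5b : ∀ (c : ℂ) k h, b k (c • h) = c • b k h := by
    intro c k h
    have := key k (c • h) h h c 0 (by simp)
    simpa using this
  let Lm : X →ₗ[ℂ] X →ₗ[ℂ] ℂ := LinearMap.mk₂ ℂ b c4a c4b c5a c5b
  let B : X →L[ℂ] X →L[ℂ] ℂ := LinearMap.mkContinuous₂ Lm (4 * M / δ ^ 2) c2
  have hBb : ∀ k h, B k h = b k h := fun k h => rfl
  refine HasFDerivAt.differentiableAt (f' := B) ?_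
  rw [hasFDerivAt_iff_isLittleO_nhds_zero]
  refine Asymptotics.IsBigO.trans_isLittleO (g := fun k : X => ‖k‖ ^ 2) ?_ ?_
  · refine Asymptotics.IsBigO.of_bound (8 * M / δ ^ 3) ?_
    filter_upwards [ball_mem_nhds (0 : X) hδ] with k hk
    rw [mem_ball_zero_iff] at hk
    refine ContinuousLinearMap.opNorm_le_bound _ (by positivity) fun h => ?_
    have := c3 k h hk
    rw [Real.norm_of_nonneg (by positivity)]
    simpa [hBb] using this
  · exact Asymptotics.isLittleO_norm_pow_id one_lt_two


lemma isOpen_im {g : ℂ → ℂ} {r : ℝ} (hg : DifferentiableOn ℂ g (ball 0 r))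
    (hg' : ∀ z ∈ ball (0 : ℂ) r, deriv g z ≠ 0) {s : Set ℂ} (hs : IsOpen s) (hsr : s ⊆ ball 0 r) :
    IsOpen (g '' s) := by
  rw [isOpen_iff_mem_nhds]
  rintro _ ⟨z, hz, rfl⟩
  have ha : AnalyticAt ℂ g z := hg.analyticAt (isOpen_ball.mem_nhds (hsr hz))
  have := ha.hasStrictDerivAt.map_nhds_eq (hg' z (hsr hz))
  rw [← this]
  exact image_mem_map (hs.mem_nhds hz)

lemma p_diff {g : ℂ → ℂ} {r : ℝ} (hg : DifferentiableOn ℂ g (ball 0 r))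
    (hg' : ∀ z ∈ ball (0 : ℂ) r, deriv g z ≠ 0) :
    DifferentiableOn ℂ (fun z => 1 + z * deriv (deriv g) z / deriv g z) (ball 0 r) := by
  have d1 : DifferentiableOn ℂ (deriv g) (ball 0 r) := hg.deriv isOpen_ball
  have d2 : DifferentiableOn ℂ (deriv (deriv g)) (ball 0 r) := d1.deriv isOpen_ball
  exact ((differentiableOn_id.mul d2).div d1 hg').const_add 1

lemma key_circle {g : ℂ → ℂ} {r : ℝ} (hg : DifferentiableOn ℂ g (ball 0 r))
    (hg' : ∀ z ∈ ball (0 : ℂ) r, deriv g z ≠ 0)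
    (hp : ∀ z ∈ ball (0 : ℂ) r, 0 < (1 + z * deriv (deriv g) z / deriv g z).re)
    {z₀ : ℂ} (hz₀ : z₀ ∈ ball (0 : ℂ) r) (hne : z₀ ≠ 0) {θ : ℝ} (h0 : 0 < θ)
    (h2 : θ < 2 * Real.pi) :
    (conj (z₀ * deriv g z₀) * (g (z₀ * Complex.exp (θ * Complex.I)) - g z₀)).re < 0 := by
  set p : ℂ → ℂ := fun z => 1 + z * deriv (deriv g) z / deriv g z with hpdef
  have hpd : DifferentiableOn ℂ p (ball 0 r) := p_diff hg hg'
  have d1 : DifferentiableOn ℂ (deriv g) (ball 0 r) := hg.deriv isOpen_ball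
  set e : ℝ → ℂ := fun t => z₀ * Complex.exp (t * Complex.I) with he
  have hemem : ∀ t, e t ∈ ball (0 : ℂ) r := by
    intro t
    simpa [he, Complex.norm_exp_ofReal_mul_I] using hz₀
  have hed : ∀ t, HasDerivAt e (Complex.I * e t) t := by
    intro t
    have h1 : HasDerivAt (fun t : ℝ => (t : ℂ) * Complex.I) Complex.I t := by
      simpa using (Complex.ofRealCLM.hasDerivAt (x := t)).mul_const Complex.I
    have := (h1.cexp).const_mul z₀
    refine this.congr_deriv ?_
    simp only [he]; ring
  have hec : Continuous e := continuous_iff_continuousAt.2 fun t => (hed t).continuousAt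
  have hpc : Continuous (fun t => p (e t)) := by
    refine continuous_iff_continuousAt.2 fun t => ?_
    exact ContinuousAt.comp (g := p)
      (hpd.differentiableAt (isOpen_ball.mem_nhds (hemem t))).continuousAt hec.continuousAt
  set P : ℝ → ℂ := fun t => ∫ s in (0 : ℝ)..t, p (e s) with hP
  have hPd : ∀ t, HasDerivAt P (p (e t)) t := by
    intro t
    exact intervalIntegral.integral_hasDerivAt_right (hpc.intervalIntegrable _ _)
      (hpc.stronglyMeasurableAtFilter _ _) hpc.continuousAt
  have hP0 : P 0 = 0 := by simp [hP]
  have hP2 : P (2 * Real.pi) = 2 * Real.pi := by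
    have hmaps : MapsTo (fun w : ℂ => z₀ * w) (closedBall 0 |1|) (ball 0 r) := by
      intro w hw
      rw [mem_closedBall_zero_iff, abs_one] at hw
      rw [mem_ball_zero_iff] at hz₀ ⊢
      rw [norm_mul]
      nlinarith [norm_nonneg z₀]
    have hdc : DifferentiableOn ℂ (fun w => p (z₀ * w)) (closedBall 0 |1|) :=
      hpd.comp (by fun_prop) hmaps
    have := (hdc.diffContOnCl_ball (c := (0 : ℂ)) (R := |1|) subset_rfl).circleAverage
    rw [Real.circleAverage_def] at this
    have hpi : (2 * Real.pi : ℝ) ≠ 0 := by positivity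
    have h3 : (∫ θ in (0 : ℝ)..2 * Real.pi, p (z₀ * circleMap 0 1 θ)) = P (2 * Real.pi) := by
      simp only [hP, he, circleMap, zero_add, Complex.ofReal_one, one_mul]
    rw [h3] at this
    have h4 : p (z₀ * 0) = 1 := by simp [hpdef]
    rw [h4, inv_smul_eq_iff₀ hpi] at this
    rw [this]; simp
  set c := z₀ * deriv g z₀ with hc
  have hc0 : c ≠ 0 := mul_ne_zero hne (hg' z₀ hz₀)
  have hqd : ∀ t, HasDerivAt (fun t => e t * deriv g (e t))
      (Complex.I * p (e t) * (e t * deriv g (e t))) t := by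
    intro t
    have hd := (d1.differentiableAt (isOpen_ball.mem_nhds (hemem t))).hasDerivAt
    have h1 := HasDerivAt.comp (h₂ := deriv g) t hd (hed t)
    have h3 := (hed t).mul h1
    have hn := hg' _ (hemem t)
    refine h3.congr_deriv ?_
    simp only [hpdef, Function.comp]
    field_simp
  have hq : ∀ t, e t * deriv g (e t) = c * Complex.exp (Complex.I * P t) := by
    have hW : ∀ t, HasDerivAt (fun t => e t * deriv g (e t) * Complex.exp (-(Complex.I * P t))) 0 t := by
      intro t
      have h1 := (hqd t).mul (((hPd t).const_mul Complex.I).neg.cexp)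
      refine h1.congr_deriv ?_
      ring
    intro t
    have := is_const_of_deriv_eq_zero (fun t => (hW t).differentiableAt) (fun t => (hW t).deriv) t 0
    simp only [hP0] at this
    have he0 : e 0 = z₀ := by simp [he]
    rw [he0] at this
    simp only [mul_zero, neg_zero, Complex.exp_zero, mul_one] at this
    rw [hc, ← this, mul_assoc _ (Complex.exp _) (Complex.exp _), ← Complex.exp_add,
      neg_add_cancel, Complex.exp_zero, mul_one]
  set G : ℝ → ℝ := fun t => (conj c * (g (e t) - g z₀)).re with hG
  have hGd : ∀ t, HasDerivAt G (-(‖c‖ ^ 2 * Real.exp (-(P t).im)) * Real.sin (P t).re) t := by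
    intro t
    have hd := (hg.differentiableAt (isOpen_ball.mem_nhds (hemem t))).hasDerivAt
    have h1 := HasDerivAt.comp (h₂ := g) t hd (hed t)
    have h3 := (h1.sub_const (g z₀)).const_mul (conj c)
    have h4 := (Complex.reCLM.hasFDerivAt.comp_hasDerivAt t h3)
    refine h4.congr_deriv ?_
    have : conj c * (deriv g (e t) * (Complex.I * e t)) =
        ((‖c‖ ^ 2 : ℝ) : ℂ) * (Complex.I * Complex.exp (Complex.I * P t)) := by
      have h5 : deriv g (e t) * (Complex.I * e t) = Complex.I * (e t * deriv g (e t)) := by ring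
      rw [h5, hq, ← Complex.normSq_eq_norm_sq, ← Complex.mul_conj]; ring
    rw [this, Complex.reCLM_apply, Complex.re_ofReal_mul]
    simp [Complex.exp_im]
    ring
  have hψd : ∀ t, HasDerivAt (fun t => (P t).re) (p (e t)).re t := fun t =>
    Complex.reCLM.hasFDerivAt.comp_hasDerivAt t (hPd t)
  have hψ : StrictMono (fun t => (P t).re) := by
    refine strictMono_of_deriv_pos fun t => ?_
    rw [(hψd t).deriv]
    exact hp _ (hemem t)
  have hψ0 : (P 0).re = 0 := by simp [hP0]
  have hψ2 : (P (2 * Real.pi)).re = 2 * Real.pi := by simp [hP2]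
  have hGc : Continuous G := continuous_iff_continuousAt.2 fun t => (hGd t).continuousAt
  have hG0 : G 0 = 0 := by simp [hG, he]
  have hG2 : G (2 * Real.pi) = 0 := by simp [hG, he, Complex.exp_two_pi_mul_I]
  have hcp : 0 < ‖c‖ := norm_pos_iff.2 hc0
  change G θ < 0
  rcases le_total (P θ).re Real.pi with hle | hle
  · have : StrictAntiOn G (Icc 0 θ) := by
      refine strictAntiOn_of_deriv_neg (convex_Icc _ _) hGc.continuousOn fun t ht => ?_
      rw [interior_Icc] at ht
      rw [(hGd t).deriv]
      have a1 : 0 < (P t).re := by rw [← hψ0]; exact hψ ht.1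
      have a2 : (P t).re < Real.pi := lt_of_lt_of_le (hψ ht.2) hle
      have := Real.sin_pos_of_pos_of_lt_pi a1 a2
      have h5 : 0 < ‖c‖ ^ 2 * Real.exp (-(P t).im) := by positivity
      nlinarith
    rw [← hG0]
    exact this (left_mem_Icc.2 h0.le) (right_mem_Icc.2 h0.le) h0
  · have : StrictMonoOn G (Icc θ (2 * Real.pi)) := by
      refine strictMonoOn_of_deriv_pos (convex_Icc _ _) hGc.continuousOn fun t ht => ?_
      rw [interior_Icc] at ht
      rw [(hGd t).deriv]
      have a1 : Real.pi < (P t).re := lt_of_le_of_lt hle (hψ ht.1)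
      have a2 : (P t).re < 2 * Real.pi := by
        have := hψ ht.2
        simp only [hψ2] at this
        exact this
      have h6 : Real.sin ((P t).re - 2 * Real.pi) < 0 :=
        Real.sin_neg_of_neg_of_neg_pi_lt (by linarith) (by linarith)
      rw [Real.sin_sub_two_pi] at h6
      have h5 : 0 < ‖c‖ ^ 2 * Real.exp (-(P t).im) := by positivity
      nlinarith
    rw [← hG2]
    exact this (left_mem_Icc.2 h2.le) (right_mem_Icc.2 h2.le) h2

lemma key_sphere {g : ℂ → ℂ} {r : ℝ} (hg : DifferentiableOn ℂ g (ball 0 r))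
    (hg' : ∀ z ∈ ball (0 : ℂ) r, deriv g z ≠ 0)
    (hp : ∀ z ∈ ball (0 : ℂ) r, 0 < (1 + z * deriv (deriv g) z / deriv g z).re)
    {z₀ : ℂ} (hz₀ : z₀ ∈ ball (0 : ℂ) r) (hne : z₀ ≠ 0) {z : ℂ} (hz : ‖z‖ = ‖z₀‖) (hzz : z ≠ z₀) :
    (conj (z₀ * deriv g z₀) * (g z - g z₀)).re < 0 := by
  set w := z / z₀ with hw
  have hzw : z = z₀ * w := by rw [hw]; field_simp
  have hwn : ‖w‖ = 1 := by rw [hw, norm_div, hz, div_self (norm_ne_zero_iff.2 hne)]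
  have hwe : Complex.exp (Complex.arg w * Complex.I) = w := by
    have := Complex.norm_mul_exp_arg_mul_I w
    rwa [hwn, Complex.ofReal_one, one_mul] at this
  have ha0 : Complex.arg w ≠ 0 := by
    intro h
    rw [h] at hwe
    apply hzz
    rw [hzw, ← hwe]; simp
  rcases lt_or_gt_of_ne ha0 with h | h
  · have := key_circle hg hg' hp hz₀ hne (θ := Complex.arg w + 2 * Real.pi)
      (by linarith [Complex.neg_pi_lt_arg w, Real.pi_pos]) (by linarith)
    rw [Complex.ofReal_add, add_mul, Complex.exp_add, hwe] at this
    have h2 : Complex.exp (((2 * Real.pi : ℝ) : ℂ) * Complex.I) = 1 := by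
      push_cast; exact Complex.exp_two_pi_mul_I
    rw [h2, mul_one, ← hzw] at this
    exact this
  · have := key_circle hg hg' hp hz₀ hne (θ := Complex.arg w) h
      (by linarith [Complex.arg_le_pi w, Real.pi_pos])
    rw [hwe, ← hzw] at this
    exact this

lemma key_closed {g : ℂ → ℂ} {r : ℝ} (hg : DifferentiableOn ℂ g (ball 0 r))
    (hg' : ∀ z ∈ ball (0 : ℂ) r, deriv g z ≠ 0)
    (hp : ∀ z ∈ ball (0 : ℂ) r, 0 < (1 + z * deriv (deriv g) z / deriv g z).re)
    {z₀ : ℂ} (hz₀ : z₀ ∈ ball (0 : ℂ) r) (hne : z₀ ≠ 0) {z : ℂ} (hz : ‖z‖ ≤ ‖z₀‖) (hzz : z ≠ z₀) :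
    (conj (z₀ * deriv g z₀) * (g z - g z₀)).re < 0 := by
  rcases hz.eq_or_lt with h | hlt
  · exact key_sphere hg hg' hp hz₀ hne h hzz
  have hρ : 0 < ‖z₀‖ := norm_pos_iff.2 hne
  have hρr : ‖z₀‖ < r := mem_ball_zero_iff.1 hz₀
  set c := z₀ * deriv g z₀ with hc
  have hc0 : c ≠ 0 := mul_ne_zero hne (hg' z₀ hz₀)
  have hsub : closedBall (0 : ℂ) ‖z₀‖ ⊆ ball 0 r := closedBall_subset_ball hρr
  have hle : ∀ w ∈ ball (0 : ℂ) ‖z₀‖, (conj c * (g w - g z₀)).re ≤ 0 := by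
    intro w hw
    have hd : DifferentiableOn ℂ (fun w => Complex.exp (conj c * (g w - g z₀)))
        (closedBall 0 ‖z₀‖) :=
      (((hg.mono hsub).sub_const (g z₀)).const_mul (conj c)).cexp
    have := Complex.norm_le_of_forall_mem_frontier_norm_le (C := 1) (isBounded_ball)
      (hd.diffContOnCl_ball (c := (0 : ℂ)) (R := ‖z₀‖) subset_rfl) ?_ (subset_closure hw)
    · rw [Complex.norm_exp] at this
      simpa using this
    · intro v hv
      rw [frontier_ball _ hρ.ne', mem_sphere_zero_iff_norm] at hv
      rw [Complex.norm_exp, Real.exp_le_one_iff]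
      by_cases hvz : v = z₀
      · simp [hvz]
      · exact (key_sphere hg hg' hp hz₀ hne hv hvz).le
  have hop : IsOpen (g '' ball 0 ‖z₀‖) :=
    isOpen_im hg hg' isOpen_ball (ball_subset_closedBall.trans hsub)
  have hzb : z ∈ ball (0 : ℂ) ‖z₀‖ := mem_ball_zero_iff.2 hlt
  obtain ⟨ε, hε, hb⟩ := Metric.isOpen_iff.1 hop (g z) ⟨z, hzb, rfl⟩
  have hcp : 0 < ‖c‖ := norm_pos_iff.2 hc0
  set τ : ℝ := ε / (2 * ‖c‖) with hτ
  have hτ0 : 0 < τ := by positivity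
  have hmem : g z + (τ : ℂ) * c ∈ ball (g z) ε := by
    rw [mem_ball, dist_eq_norm, add_sub_cancel_left, norm_mul, Complex.norm_real,
      Real.norm_of_nonneg hτ0.le, hτ]
    have : ε / (2 * ‖c‖) * ‖c‖ = ε / 2 := by field_simp
    linarith
  obtain ⟨v, hv, hvg⟩ := hb hmem
  have h1 := hle v hv
  rw [hvg] at h1
  have h2 : conj c * (g z + (τ : ℂ) * c - g z₀) = conj c * (g z - g z₀) + ((τ * ‖c‖ ^ 2 : ℝ) : ℂ) := by
    rw [Complex.ofReal_mul, ← Complex.normSq_eq_norm_sq, ← Complex.mul_conj]; ring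
  rw [h2, Complex.add_re, Complex.ofReal_re] at h1
  have : 0 < τ * ‖c‖ ^ 2 := by positivity
  linarith

lemma suff {g : ℂ → ℂ} {r : ℝ} (hg : DifferentiableOn ℂ g (ball 0 r))
    (hg' : ∀ z ∈ ball (0 : ℂ) r, deriv g z ≠ 0)
    (hp : ∀ z ∈ ball (0 : ℂ) r, 0 < (1 + z * deriv (deriv g) z / deriv g z).re) :
    InjOn g (ball 0 r) ∧ Convex ℝ (g '' ball 0 r) := by
  have key : ∀ z₀ ∈ ball (0 : ℂ) r, ∀ z, ‖z‖ ≤ ‖z₀‖ → z ≠ z₀ → z₀ ≠ 0 →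
    (conj (z₀ * deriv g z₀) * (g z - g z₀)).re < 0 := fun z₀ hz₀ z hz hzz hne =>
      key_closed hg hg' hp hz₀ hne hz hzz
  constructor
  · have aux : ∀ z₁ ∈ ball (0 : ℂ) r, ∀ z₂, ‖z₂‖ ≤ ‖z₁‖ → g z₁ = g z₂ → z₁ = z₂ := by
      intro z₁ h₁ z₂ hle he
      by_contra hne
      by_cases h0 : z₁ = 0
      · rw [h0, norm_zero] at hle
        exact hne (h0.trans (norm_le_zero_iff.1 hle).symm)
      · have := key z₁ h₁ z₂ hle (Ne.symm hne) h0
        rw [he] at this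
        simp at this
    intro z₁ h₁ z₂ h₂ he
    rcases le_total ‖z₂‖ ‖z₁‖ with h | h
    · exact aux z₁ h₁ z₂ h he
    · exact (aux z₂ h₂ z₁ h he.symm).symm
  · have conv : ∀ ρ, 0 < ρ → ρ < r → Convex ℝ (g '' ball 0 ρ) := by
      intro ρ hρ hρr
      set C : Set ℂ := {w | ∀ z₀ : ℂ, ‖z₀‖ = ρ → (conj (z₀ * deriv g z₀) * (w - g z₀)).re < 0}
        with hC
      have hsub : closedBall (0 : ℂ) ρ ⊆ ball 0 r := closedBall_subset_ball hρr
      have hCc : Convex ℝ C := by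
        intro w₁ h₁ w₂ h₂ a b ha hb hab z₀ hz₀
        have e1 := h₁ z₀ hz₀
        have e2 := h₂ z₀ hz₀
        have : conj (z₀ * deriv g z₀) * (a • w₁ + b • w₂ - g z₀) =
            (a : ℂ) * (conj (z₀ * deriv g z₀) * (w₁ - g z₀)) +
            (b : ℂ) * (conj (z₀ * deriv g z₀) * (w₂ - g z₀)) := by
          have hab' : (b : ℂ) = 1 - a := by rw [← Complex.ofReal_one, ← hab]; push_cast; ring
          simp only [Complex.real_smul, hab']; ring
        rw [this, Complex.add_re, Complex.re_ofReal_mul, Complex.re_ofReal_mul]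
        rcases ha.eq_or_lt with h | h
        · rw [← h] at hab ⊢
          have : b = 1 := by linarith
          rw [this]; linarith
        · nlinarith
      have hsubC : g '' ball 0 ρ ⊆ C := by
        rintro _ ⟨z, hz, rfl⟩ z₀ hz₀
        have hzρ : ‖z‖ < ρ := mem_ball_zero_iff.1 hz
        refine key z₀ (by rw [mem_ball_zero_iff]; linarith) z (by linarith) ?_ ?_
        · rintro rfl; linarith
        · rintro rfl; simp at hz₀; linarith
      have hop : IsOpen (g '' ball 0 ρ) :=
        isOpen_im hg hg' isOpen_ball (ball_subset_closedBall.trans hsub)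
      have hcl : IsClosed (g '' closedBall 0 ρ) :=
        ((isCompact_closedBall (0 : ℂ) ρ).image_of_continuousOn
          (hg.continuousOn.mono hsub)).isClosed
      have hCsub : C ⊆ g '' ball 0 ρ := by
        refine hCc.isPreconnected.subset_of_closure_inter_subset hop
          ⟨g 0, hsubC ⟨0, mem_ball_self hρ, rfl⟩, ⟨0, mem_ball_self hρ, rfl⟩⟩ ?_
        rintro w ⟨hw, hwC⟩
        have : w ∈ g '' closedBall 0 ρ :=
          closure_minimal (image_mono ball_subset_closedBall) hcl hw
        obtain ⟨z, hz, rfl⟩ := this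
        rcases (mem_closedBall_zero_iff.1 hz).eq_or_lt with h | h
        · have := hwC z h
          simp at this
        · exact ⟨z, mem_ball_zero_iff.2 h, rfl⟩
      rw [hsubC.antisymm hCsub]
      exact hCc
    rintro _ ⟨z₁, h₁, rfl⟩ _ ⟨z₂, h₂, rfl⟩ a b ha hb hab
    rw [mem_ball_zero_iff] at h₁ h₂
    obtain ⟨ρ, hρ1, hρ2⟩ := exists_between (max_lt h₁ h₂)
    have hρ0 : 0 < ρ := lt_of_le_of_lt ((norm_nonneg _).trans (le_max_left _ _)) hρ1
    have := conv ρ hρ0 hρ2 ⟨z₁, mem_ball_zero_iff.2 (lt_of_le_of_lt (le_max_left _ _) hρ1), rfl⟩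
      ⟨z₂, mem_ball_zero_iff.2 (lt_of_le_of_lt (le_max_right _ _) hρ1), rfl⟩ ha hb hab
    exact image_mono (ball_subset_ball hρ2.le) this

lemma sym2 {u : ℂ → ℂ} (hu : AnalyticAt ℂ u 0) :
    Tendsto (fun t : ℂ => (t ^ 2)⁻¹ * (u t + u (-t) - 2 * u 0)) (𝓝[≠] 0)
      (𝓝 (deriv (deriv u) 0)) := by
  have hdsl : ∀ {w : ℂ → ℂ}, AnalyticAt ℂ w 0 → AnalyticAt ℂ (dslope w 0) 0 := by
    rintro w ⟨p, hp⟩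
    exact ⟨_, hp.has_fpower_series_dslope_fslope⟩
  set v := dslope u 0 with hv
  have hva : AnalyticAt ℂ v 0 := hdsl hu
  set w := dslope v 0 with hw
  have hwa : AnalyticAt ℂ w 0 := hdsl hva
  have eu : ∀ t, u t = u 0 + t * v t := by
    intro t
    have := sub_smul_dslope u 0 t
    simp only [sub_zero, smul_eq_mul] at this
    rw [hv, this]; ring
  have ev : ∀ t, v t = v 0 + t * w t := by
    intro t
    have := sub_smul_dslope v 0 t
    simp only [sub_zero, smul_eq_mul] at this
    rw [hw, this]; ring
  have hd1 : deriv u =ᶠ[𝓝 0] fun t => v t + t * deriv v t := by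
    filter_upwards [hva.eventually_analyticAt] with t ht
    have h1 : HasDerivAt (fun t => u 0 + t * v t) (1 * v t + t * deriv v t) t :=
      ((hasDerivAt_id t).mul ht.differentiableAt.hasDerivAt).const_add _
    have h2 : u = fun t => u 0 + t * v t := funext eu
    rw [h2, h1.deriv, one_mul]
  have hd2 : deriv (deriv u) 0 = 2 * w 0 := by
    rw [hd1.deriv_eq]
    have h1 : HasDerivAt (fun t => v t + t * deriv v t)
        (deriv v 0 + (1 * deriv v 0 + 0 * deriv (deriv v) 0)) 0 :=
      hva.differentiableAt.hasDerivAt.add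
        ((hasDerivAt_id (0 : ℂ)).mul hva.deriv.differentiableAt.hasDerivAt)
    rw [h1.deriv, hw, dslope_same]; ring
  rw [hd2]
  have hlim : Tendsto (fun t : ℂ => w t + w (-t)) (𝓝[≠] 0) (𝓝 (2 * w 0)) := by
    have c1 : ContinuousAt w 0 := hwa.continuousAt
    have c2 : ContinuousAt (fun t : ℂ => w (-t)) 0 := by
      refine ContinuousAt.comp (g := w) ?_ continuousAt_neg
      simpa using c1
    have := (c1.add c2).tendsto.mono_left (nhdsWithin_le_nhds (s := {0}ᶜ))
    have e : w 0 + w (-0) = 2 * w 0 := by rw [neg_zero]; ring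
    rw [← e]
    exact this
  refine hlim.congr' ?_
  filter_upwards [self_mem_nhdsWithin] with t ht
  have ht0 : t ≠ 0 := ht
  rw [eu t, eu (-t), ev t, ev (-t)]
  field_simp
  ring

lemma inv_diff {g : ℂ → ℂ} {r : ℝ} (hr : 0 < r) (hg : DifferentiableOn ℂ g (ball 0 r))
    (hinj : InjOn g (ball 0 r)) :
    IsOpen (g '' ball 0 r) ∧ ∀ z ∈ ball (0 : ℂ) r, deriv g z ≠ 0 ∧
      HasDerivAt (Function.invFunOn g (ball 0 r)) (deriv g z)⁻¹ (g z) := by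
  set B := ball (0 : ℂ) r with hB
  set k := Function.invFunOn g B with hk
  have hkg : ∀ z ∈ B, k (g z) = z := fun z hz => hinj.leftInvOn_invFunOn hz
  have hBo : IsOpen B := isOpen_ball
  have han : AnalyticOnNhd ℂ g B := fun z hz => hg.analyticAt (hBo.mem_nhds hz)
  have hop : ∀ s ⊆ B, IsOpen s → IsOpen (g '' s) := by
    refine (han.is_constant_or_isOpen (convex_ball _ _).isPreconnected).resolve_left ?_
    rintro ⟨w, hw⟩
    have h0 : (0 : ℂ) ∈ B := mem_ball_self hr
    have h1 : ((r / 2 : ℝ) : ℂ) ∈ B := by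
      rw [hB, mem_ball_zero_iff, Complex.norm_real, Real.norm_of_nonneg (by linarith)]; linarith
    have := hinj h0 h1 ((hw _ h0).trans (hw _ h1).symm)
    have h2 : (0 : ℝ) = r / 2 := by exact_mod_cast this
    linarith
  have hcont : ∀ z ∈ B, ContinuousAt k (g z) := by
    intro z hz V hV
    rw [hkg z hz] at hV
    obtain ⟨W, hWV, hW, hzW⟩ := _root_.mem_nhds_iff.1 hV
    have : g '' (W ∩ B) ∈ 𝓝 (g z) :=
      (hop _ inter_subset_right (hW.inter hBo)).mem_nhds ⟨z, ⟨hzW, hz⟩, rfl⟩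
    rw [Filter.mem_map]
    refine mem_of_superset this ?_
    rintro _ ⟨y, ⟨hyW, hyB⟩, rfl⟩
    change k (g y) ∈ V
    rw [hkg y hyB]; exact hWV hyW
  have hright : ∀ z ∈ B, ∀ᶠ y in 𝓝 (g z), g (k y) = y := by
    intro z hz
    filter_upwards [(hop B subset_rfl hBo).mem_nhds ⟨z, hz, rfl⟩]
    rintro _ ⟨y, hy, rfl⟩
    rw [hkg y hy]
  have hder : ∀ z ∈ B, deriv g z ≠ 0 → HasDerivAt k (deriv g z)⁻¹ (g z) := by
    intro z hz hne
    refine HasDerivAt.of_local_left_inverse (hcont z hz) ?_ hne (hright z hz)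
    rw [hkg z hz]
    exact (han z hz).differentiableAt.hasDerivAt
  refine ⟨hop B subset_rfl hBo, fun z hz => ?_⟩
  suffices h : deriv g z ≠ 0 from ⟨h, hder z hz h⟩
  have hka : DifferentiableAt ℂ k (g z) := by
    refine (Complex.analyticAt_of_differentiable_on_punctured_nhds_of_continuousAt ?_
      (hcont z hz)).differentiableAt
    rcases (han z hz).deriv.eventually_eq_zero_or_eventually_ne_zero with h | h
    · exfalso
      obtain ⟨ε, hε, hsub⟩ := Metric.mem_nhds_iff.1 (inter_mem h (hBo.mem_nhds hz))
      have hconst : ∀ y ∈ ball z ε, g y = g z := by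
        intro y hy
        refine (convex_ball z ε).is_const_of_fderivWithin_eq_zero (𝕜 := ℂ)
          (hg.mono fun y hy => (hsub hy).2) ?_ hy (mem_ball_self hε)
        intro y hy
        rw [fderivWithin_of_isOpen isOpen_ball hy]
        ext
        have : deriv g y = 0 := (hsub hy).1
        simpa using this
      have hy : z + ((ε / 2 : ℝ) : ℂ) ∈ ball z ε := by
        rw [mem_ball, dist_eq_norm, add_sub_cancel_left, Complex.norm_real,
          Real.norm_of_nonneg (by linarith)]; linarith
      have := hinj (hsub hy).2 hz (hconst _ hy)
      have h3 : ((ε / 2 : ℝ) : ℂ) = 0 := by simpa using this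
      have h4 : ε / 2 = 0 := by exact_mod_cast h3
      linarith
    · rw [eventually_nhdsWithin_iff] at h ⊢
      obtain ⟨W, hWs, hW, hzW⟩ := _root_.mem_nhds_iff.1 h
      have : g '' (W ∩ B) ∈ 𝓝 (g z) :=
        (hop _ inter_subset_right (hW.inter hBo)).mem_nhds ⟨z, ⟨hzW, hz⟩, rfl⟩
      filter_upwards [this]
      rintro _ ⟨y, ⟨hyW, hyB⟩, rfl⟩ hne
      refine (hder y hyB (hWs hyW ?_)).differentiableAt
      rintro rfl
      exact hne rfl
  have hcomp := HasDerivAt.comp z hka.hasDerivAt (han z hz).differentiableAt.hasDerivAt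
  have hid : HasDerivAt (k ∘ g) 1 z := by
    refine (hasDerivAt_id z).congr_of_eventuallyEq ?_
    filter_upwards [hBo.mem_nhds hz] with y hy
    exact hkg y hy
  have := hcomp.unique hid
  intro h0
  rw [h0, mul_zero] at this
  exact zero_ne_one this

lemma nec {g : ℂ → ℂ} {r : ℝ} (hr : 0 < r) (hg : DifferentiableOn ℂ g (ball 0 r))
    (hinj : InjOn g (ball 0 r)) (hconv : Convex ℝ (g '' ball 0 r)) :
    ∀ z ∈ ball (0 : ℂ) r, deriv g z ≠ 0 ∧
      0 < (1 + z * deriv (deriv g) z / deriv g z).re := by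
  obtain ⟨hop, hinv⟩ := inv_diff hr hg hinj
  set B := ball (0 : ℂ) r with hB
  set k := Function.invFunOn g B with hk
  have hkg : ∀ z ∈ B, k (g z) = z := fun z hz => hinj.leftInvOn_invFunOn hz
  have hBo : IsOpen B := isOpen_ball
  have hrot : ∀ θ : ℝ, ∀ z ∈ B, Complex.exp (θ * Complex.I) * z ∈ B := by
    intro θ z hz
    rw [hB, mem_ball_zero_iff] at *
    rwa [norm_mul, Complex.norm_exp_ofReal_mul_I, one_mul]
  have hge : ∀ z ∈ B, 0 ≤ (1 + z * deriv (deriv g) z / deriv g z).re := by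
    intro z hz
    by_cases hz0 : z = 0
    · simp [hz0]
    set H : ℝ → ℂ → ℂ := fun θ y => (1 / 2 : ℝ) • g (Complex.exp (θ * Complex.I) * y) +
      (1 / 2 : ℝ) • g (Complex.exp ((-θ : ℝ) * Complex.I) * y) with hH
    have hHm : ∀ θ, ∀ y ∈ B, H θ y ∈ g '' B := by
      intro θ y hy
      exact hconv ⟨_, hrot θ y hy, rfl⟩ ⟨_, hrot (-θ) y hy, rfl⟩ (by norm_num) (by norm_num)
        (by norm_num)
    have hkd : DifferentiableOn ℂ k (g '' B) := by
      rintro _ ⟨y, hy, rfl⟩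
      exact (hinv y hy).2.differentiableAt.differentiableWithinAt
    have hHd : ∀ θ, DifferentiableOn ℂ (H θ) B := by
      intro θ
      have a1 : ∀ θ : ℝ, DifferentiableOn ℂ (fun y => g (Complex.exp (θ * Complex.I) * y)) B :=
        fun θ => hg.comp (by fun_prop) (fun y hy => hrot θ y hy)
      exact ((a1 θ).const_smul (1 / 2 : ℝ)).add ((a1 (-θ)).const_smul (1 / 2 : ℝ))
    have hkm : ∀ w ∈ g '' B, k w ∈ B := by
      rintro _ ⟨y, hy, rfl⟩
      rw [hkg y hy]; exact hy
    have hSch : ∀ θ, ‖k (H θ z)‖ ≤ ‖z‖ := by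
      intro θ
      refine Complex.norm_le_norm_of_mapsTo_ball (f := fun y => k (H θ y)) (R := r)
        (hkd.comp (hHd θ) (hHm θ)) ?_ ?_ (mem_ball_zero_iff.1 hz)
      · intro y hy
        exact ball_subset_closedBall (hkm _ (hHm θ y hy))
      · have : H θ 0 = g 0 := by
          simp only [hH, mul_zero]
          rw [← add_smul]; norm_num
        simp only [this]
        exact hkg 0 (mem_ball_self hr)
    set u : ℂ → ℂ := fun t => g (Complex.exp (t * Complex.I) * z) with hu
    have hga : AnalyticAt ℂ g z := hg.analyticAt (hBo.mem_nhds hz)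
    set E : ℂ → ℂ := fun t => Complex.exp (t * Complex.I) * z with hE
    have hE0 : E 0 = z := by simp [hE]
    have hEa : AnalyticAt ℂ E 0 := by
      have : Differentiable ℂ E := by simp only [hE]; fun_prop
      exact this.analyticAt 0
    have hEd : ∀ t, HasDerivAt E (Complex.I * E t) t := by
      intro t
      have h1 : HasDerivAt (fun t : ℂ => t * Complex.I) (1 * Complex.I) t :=
        (hasDerivAt_id t).mul_const Complex.I
      refine (h1.cexp.mul_const z).congr_deriv ?_
      simp only [hE]; ring
    have hua : AnalyticAt ℂ u 0 := by
      refine AnalyticAt.comp (g := g) (f := E) ?_ hEa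
      rw [hE0]; exact hga
    have hu1 : deriv u =ᶠ[𝓝 0] fun t => deriv g (E t) * (Complex.I * E t) := by
      have : ∀ᶠ t in 𝓝 (0 : ℂ), E t ∈ B := by
        refine hEa.continuousAt.eventually_mem ?_
        rw [hE0]; exact hBo.mem_nhds hz
      filter_upwards [this] with t ht
      exact (HasDerivAt.comp (h₂ := g) t
        (hg.differentiableAt (hBo.mem_nhds ht)).hasDerivAt (hEd t)).deriv
    have hu2 : deriv (deriv u) 0 = -(z * deriv g z + z ^ 2 * deriv (deriv g) z) := by
      rw [hu1.deriv_eq]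
      have b1 : HasDerivAt (deriv g) (deriv (deriv g) z) (E 0) := by
        rw [hE0]; exact hga.deriv.differentiableAt.hasDerivAt
      have b2 := (HasDerivAt.comp (h₂ := deriv g) 0 b1 (hEd 0)).mul ((hEd 0).const_mul Complex.I)
      have b3 := b2.deriv
      simp only [Function.comp_def] at b3
      refine Eq.trans b3 ?_
      rw [hE0]
      linear_combination (z * deriv g z + z ^ 2 * deriv (deriv g) z) * Complex.I_sq
    have hlim := sym2 hua
    rw [hu2] at hlim
    have hto : Tendsto (fun θ : ℝ => (θ : ℂ)) (𝓝[≠] 0) (𝓝[≠] 0) := by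
      refine tendsto_nhdsWithin_of_tendsto_nhds_of_eventually_within _ ?_ ?_
      · have : ContinuousAt (fun θ : ℝ => (θ : ℂ)) 0 := Complex.continuous_ofReal.continuousAt
        have h2 := this.tendsto.mono_left (nhdsWithin_le_nhds (s := {0}ᶜ))
        simpa using h2
      · filter_upwards [self_mem_nhdsWithin] with θ hθ
        have : θ ≠ 0 := hθ
        simpa using this
    have hlimR := hlim.comp hto
    set D := -(1 / 2 : ℂ) * (z + z ^ 2 * deriv (deriv g) z / deriv g z) with hD
    have hcd : Tendsto (fun θ : ℝ => (((θ : ℂ) ^ 2)⁻¹) • (H θ z - g z)) (𝓝[≠] 0)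
        (𝓝 ((1 / 2 : ℂ) * -(z * deriv g z + z ^ 2 * deriv (deriv g) z))) := by
      refine (hlimR.const_mul (1 / 2 : ℂ)).congr fun θ => ?_
      simp only [Function.comp, hu, hH, Complex.real_smul, smul_eq_mul]
      push_cast
      simp only [zero_mul, Complex.exp_zero, one_mul]
      ring
    have hdlim : Tendsto (fun θ : ℝ => H θ z - g z) (𝓝[≠] 0) (𝓝 0) := by
      have h1 := ((hto.mono_right nhdsWithin_le_nhds).pow 2).mul hcd
      rw [zero_pow two_ne_zero, zero_mul] at h1
      refine h1.congr' ?_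
      filter_upwards [self_mem_nhdsWithin] with θ hθ
      have hθ0 : θ ≠ 0 := hθ
      have : (θ : ℂ) ≠ 0 := by exact_mod_cast hθ0
      rw [smul_eq_mul]; field_simp
    have hslope := (hasFDerivWithinAt_univ.2 (hinv z hz).2.hasFDerivAt).lim hdlim
      (Eventually.of_forall fun _ => mem_univ _) hcd
    have hslope' : Tendsto (fun θ : ℝ => (((θ : ℂ) ^ 2)⁻¹) * (k (H θ z) - z)) (𝓝[≠] 0) (𝓝 D) := by
      have hn := (hinv z hz).1
      have e : D = (1 / 2 : ℂ) * -(z * deriv g z + z ^ 2 * deriv (deriv g) z) *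
          (deriv g z)⁻¹ := by rw [hD]; field_simp
      rw [e]
      simpa [hkg z hz] using hslope
    have hneg : ∀ᶠ θ : ℝ in 𝓝[≠] 0,
        (conj z * ((((θ : ℂ) ^ 2)⁻¹) * (k (H θ z) - z))).re ≤ 0 := by
      filter_upwards [self_mem_nhdsWithin] with θ hθ
      have hs := hSch θ
      have e1 : ((θ : ℂ) ^ 2)⁻¹ = (((θ ^ 2)⁻¹ : ℝ) : ℂ) := by push_cast; rfl
      rw [e1, mul_left_comm, Complex.re_ofReal_mul]
      refine mul_nonpos_of_nonneg_of_nonpos (by positivity) ?_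
      set y := k (H θ z)
      have h1 : ‖y‖ ^ 2 ≤ ‖z‖ ^ 2 := by gcongr
      rw [← Complex.normSq_eq_norm_sq, ← Complex.normSq_eq_norm_sq, Complex.normSq_apply,
        Complex.normSq_apply] at h1
      simp only [Complex.mul_re, Complex.conj_re, Complex.conj_im, Complex.sub_re, Complex.sub_im]
      nlinarith [sq_nonneg (y.re - z.re), sq_nonneg (y.im - z.im)]
    have hfin : (conj z * D).re ≤ 0 := by
      refine le_of_tendsto ?_ hneg
      exact (Complex.continuous_re.tendsto _).comp (hslope'.const_mul (conj z))
    have e2 : conj z * D = ((-(1 / 2) * ‖z‖ ^ 2 : ℝ) : ℂ) *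
        (1 + z * deriv (deriv g) z / deriv g z) := by
      rw [hD, Complex.ofReal_mul, ← Complex.normSq_eq_norm_sq, ← Complex.mul_conj]
      push_cast
      ring
    rw [e2, Complex.re_ofReal_mul] at hfin
    have hzp : 0 < ‖z‖ := norm_pos_iff.2 hz0
    by_contra hcon
    push Not at hcon
    have : 0 < ‖z‖ ^ 2 := by positivity
    nlinarith
  intro z hz
  refine ⟨(hinv z hz).1, lt_of_le_of_ne (hge z hz) fun heq => ?_⟩
  have hpd := p_diff hg (fun z hz => (hinv z hz).1)
  have hpa : AnalyticOnNhd ℂ (fun z => 1 + z * deriv (deriv g) z / deriv g z) B :=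
    fun z hz => hpd.analyticAt (hBo.mem_nhds hz)
  rcases hpa.is_constant_or_isOpen (convex_ball _ _).isPreconnected with ⟨w, hw⟩ | h
  · have h1 := hw 0 (mem_ball_self hr)
    have h2 := hw z hz
    rw [h2, ← h1] at heq
    simp at heq
  · have ho := h B subset_rfl hBo
    obtain ⟨ε, hε, hb⟩ := Metric.isOpen_iff.1 ho _ ⟨z, hz, rfl⟩
    have hm : (1 + z * deriv (deriv g) z / deriv g z) - ((ε / 2 : ℝ) : ℂ) ∈
        ball (1 + z * deriv (deriv g) z / deriv g z) ε := by
      rw [mem_ball, dist_eq_norm, sub_sub_cancel_left, norm_neg, Complex.norm_real,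
        Real.norm_of_nonneg (by linarith)]; linarith
    obtain ⟨y, hy, hye⟩ := hb hm
    have := hge y hy
    replace hye : 1 + y * deriv (deriv g) y / deriv g y = 1 + z * deriv (deriv g) z / deriv g z - ((ε / 2 : ℝ) : ℂ) := hye
    rw [hye, Complex.sub_re, ← heq, Complex.ofReal_re] at this
    linarith

lemma F_calc {X : Type*} [NormedAddCommGroup X] [NormedSpace ℂ X]
    {f : X → ℂ} (hf : DifferentiableOn ℂ f (ball (0 : X) 1))
    {F : X → X} (hF : ∀ x ∈ ball (0 : X) 1, F x = f x • x) {x : X} (hx : x ∈ ball (0 : X) 1) :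
    (∀ h, fderiv ℂ F x h = f x • h + (fderiv ℂ f x h) • x) ∧
    iteratedFDeriv ℂ 2 F x ![x, x] =
      (2 * fderiv ℂ f x x + fderiv ℂ (fderiv ℂ f) x x x) • x := by
  have h1 : ∀ y ∈ ball (0 : X) 1, fderiv ℂ F y =
      f y • ContinuousLinearMap.id ℂ X + (fderiv ℂ f y).smulRight y := by
    intro y hy
    have hn : ball (0 : X) 1 ∈ 𝓝 y := isOpen_ball.mem_nhds hy
    have hFe : F =ᶠ[𝓝 y] fun y => f y • y := by
      filter_upwards [hn] with z hz using hF z hz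
    have := ((hf.differentiableAt hn).hasFDerivAt.smul (hasFDerivAt_id y)).congr_of_eventuallyEq hFe
    exact this.fderiv
  refine ⟨fun h => by rw [h1 x hx]; simp, ?_⟩
  have hn : ball (0 : X) 1 ∈ 𝓝 x := isOpen_ball.mem_nhds hx
  have he : fderiv ℂ F =ᶠ[𝓝 x] fun y =>
      f y • ContinuousLinearMap.id ℂ X + ContinuousLinearMap.smulRightL ℂ X X (fderiv ℂ f y) y := by
    filter_upwards [hn] with y hy
    rw [h1 y hy]
    rfl
  have hd2 := (fderiv_diff isOpen_ball hf hx).hasFDerivAt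
  have hfx := (hf.differentiableAt hn).hasFDerivAt
  have hB : HasFDerivAt (fun y => ContinuousLinearMap.smulRightL ℂ X X (fderiv ℂ f y) y) _ x :=
    (ContinuousLinearMap.smulRightL ℂ X X).hasFDerivAt_of_bilinear hd2 (hasFDerivAt_id x)
  have hA : HasFDerivAt (fun y => f y • ContinuousLinearMap.id ℂ X) _ x :=
    hfx.smul_const (ContinuousLinearMap.id ℂ X)
  have := (hA.add hB).congr_of_eventuallyEq he
  rw [iteratedFDeriv_two_apply, this.fderiv]
  simp [ContinuousLinearMap.precompR, ContinuousLinearMap.precompL]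
  module

lemma g_calc {X : Type*} [NormedAddCommGroup X] [NormedSpace ℂ X]
    {f : X → ℂ} (hf : DifferentiableOn ℂ f (ball (0 : X) 1)) {u : X} {ζ : ℂ}
    (hx : ζ • u ∈ ball (0 : X) 1) :
    deriv (fun ζ : ℂ => ζ * f (ζ • u)) ζ = f (ζ • u) + fderiv ℂ f (ζ • u) (ζ • u) ∧
    ζ * deriv (deriv (fun ζ : ℂ => ζ * f (ζ • u))) ζ = 2 * fderiv ℂ f (ζ • u) (ζ • u) +
      fderiv ℂ (fderiv ℂ f) (ζ • u) (ζ • u) (ζ • u) := by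
  have hl : ∀ t : ℂ, HasDerivAt (fun t : ℂ => t • u) u t := by
    intro t
    simpa using (hasDerivAt_id t).smul_const u
  have hfu : ∀ t : ℂ, t • u ∈ ball (0 : X) 1 →
      HasDerivAt (fun t : ℂ => f (t • u)) (fderiv ℂ f (t • u) u) t := by
    intro t ht
    exact HasFDerivAt.comp_hasDerivAt (l := f) t
      (hf.differentiableAt (isOpen_ball.mem_nhds ht)).hasFDerivAt (hl t)
  have h1 : ∀ t : ℂ, t • u ∈ ball (0 : X) 1 →
      deriv (fun ζ : ℂ => ζ * f (ζ • u)) t = f (t • u) + t * fderiv ℂ f (t • u) u := by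
    intro t ht
    have := ((hasDerivAt_id t).mul (hfu t ht)).deriv
    refine Eq.trans this ?_
    simp
  have hev : ∀ᶠ t : ℂ in 𝓝 ζ, t • u ∈ ball (0 : X) 1 :=
    (hl ζ).continuousAt.eventually_mem (isOpen_ball.mem_nhds hx)
  have h2 : deriv (fun ζ : ℂ => ζ * f (ζ • u)) =ᶠ[𝓝 ζ]
      fun t => f (t • u) + t * fderiv ℂ f (t • u) u := by
    filter_upwards [hev] with t ht using h1 t ht
  have hd2 : HasDerivAt (fun t : ℂ => fderiv ℂ f (t • u)) (fderiv ℂ (fderiv ℂ f) (ζ • u) u) ζ :=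
    HasFDerivAt.comp_hasDerivAt (l := fderiv ℂ f) ζ
      (fderiv_diff isOpen_ball hf hx).hasFDerivAt (hl ζ)
  have hd3 : HasDerivAt (fun t : ℂ => fderiv ℂ f (t • u) u)
      (fderiv ℂ (fderiv ℂ f) (ζ • u) u u) ζ := by
    simpa using hd2.clm_apply (hasDerivAt_const ζ u)
  constructor
  · rw [h1 ζ hx, map_smul, smul_eq_mul]
  · rw [h2.deriv_eq]
    have := ((hfu ζ hx).add ((hasDerivAt_id ζ).mul hd3)).deriv
    have h4 : deriv (fun t => f (t • u) + t * fderiv ℂ f (t • u) u) ζ = _ := this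
    rw [h4]
    simp only [map_smul, ContinuousLinearMap.smul_apply, smul_eq_mul, id]
    ring

/-- **Quasi-convexity criterion.** Let `F(x) = f(x)·x` on the unit ball `𝔹` of a complex
Banach space `X`, with `f` holomorphic on `𝔹`, `f(0) = 1`, and let `0 < r ≤ 1`. Then the
following are equivalent:
(a) for every `x ∈ B_r \ {0}`, the Fréchet derivative `DF(x)` is invertible and
`Re l_x([DF(x)]⁻¹(D²F(x)(x,x) + DF(x)x)) > 0` for every `l_x ∈ T(x)`
(`F` is quasi-convex of type `B` on `B_r`);
(b) for every `u` with `‖u‖ = 1`, the function `f_u(ζ) = ζ·f(ζu)` is convex on `𝕌_r`,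
i.e. injective holomorphic with convex image. -/
theorem stmt2 {X : Type*} [NormedAddCommGroup X] [NormedSpace ℂ X] [CompleteSpace X]
    (r : ℝ) (hr : r ∈ Set.Ioc (0 : ℝ) 1)
    (f : X → ℂ) (hf : DifferentiableOn ℂ f (ball (0 : X) 1)) (hf0 : f 0 = 1)
    (F : X → X) (hF : ∀ x ∈ ball (0 : X) 1, F x = f x • x) :
    (∀ x ∈ ball (0 : X) r, x ≠ 0 →
        ∃ A : X →L[ℂ] X,
          A.comp (fderiv ℂ F x) = ContinuousLinearMap.id ℂ X ∧
          (fderiv ℂ F x).comp A = ContinuousLinearMap.id ℂ X ∧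
          ∀ l : X →L[ℂ] ℂ, l x = (‖x‖ : ℂ) → ‖l‖ = 1 →
            0 < (l (A (iteratedFDeriv ℂ 2 F x ![x, x] + fderiv ℂ F x x))).re)
      ↔
    (∀ u : X, ‖u‖ = 1 →
        DifferentiableOn ℂ (fun ζ : ℂ => ζ * f (ζ • u)) (ball (0 : ℂ) r) ∧
        Set.InjOn (fun ζ : ℂ => ζ * f (ζ • u)) (ball (0 : ℂ) r) ∧
        Convex ℝ ((fun ζ : ℂ => ζ * f (ζ • u)) '' ball (0 : ℂ) r)) := by
  obtain ⟨hr0, hr1⟩ := hr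
  have hsubr : ball (0 : X) r ⊆ ball 0 1 := ball_subset_ball hr1
  have hmem : ∀ u : X, ‖u‖ = 1 → ∀ ζ ∈ ball (0 : ℂ) r, ζ • u ∈ ball (0 : X) r := by
    intro u hu ζ hζ
    rw [mem_ball_zero_iff] at *
    rwa [norm_smul, hu, mul_one]
  have hgd : ∀ u : X, ‖u‖ = 1 →
      DifferentiableOn ℂ (fun ζ : ℂ => ζ * f (ζ • u)) (ball (0 : ℂ) r) := by
    intro u hu
    refine differentiableOn_id.mul ?_
    exact hf.comp (by fun_prop) (fun ζ hζ => hsubr (hmem u hu ζ hζ))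
  -- the value of the functional, whenever `A` is a left inverse
  have hval : ∀ (u : X) (ζ : ℂ), ζ • u ∈ ball (0 : X) 1 → ζ • u ≠ 0 → ∀ A : X →L[ℂ] X,
      A.comp (fderiv ℂ F (ζ • u)) = ContinuousLinearMap.id ℂ X →
      deriv (fun ζ : ℂ => ζ * f (ζ • u)) ζ ≠ 0 ∧
      ∀ l : X →L[ℂ] ℂ, l (ζ • u) = (‖ζ • u‖ : ℂ) →
        (l (A (iteratedFDeriv ℂ 2 F (ζ • u) ![ζ • u, ζ • u] + fderiv ℂ F (ζ • u) (ζ • u)))).re =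
        ‖ζ • u‖ * (1 + ζ * deriv (deriv (fun ζ : ℂ => ζ * f (ζ • u))) ζ /
          deriv (fun ζ : ℂ => ζ * f (ζ • u)) ζ).re := by
    intro u ζ hx hx0 A hA
    obtain ⟨g1, g2⟩ := g_calc hf hx
    obtain ⟨F1, F2⟩ := F_calc hf hF hx
    set x := ζ • u with hxdef
    set a := deriv (fun ζ : ℂ => ζ * f (ζ • u)) ζ with ha
    set b := ζ * deriv (deriv (fun ζ : ℂ => ζ * f (ζ • u))) ζ with hb
    have hFx : fderiv ℂ F x x = a • x := by rw [F1, g1, add_smul]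
    have hAx : a • A x = x := by
      have := congrArg (fun T : X →L[ℂ] X => T x) hA
      simpa [hFx] using this
    have ha0 : a ≠ 0 := by
      intro h
      rw [h, zero_smul] at hAx
      exact hx0 hAx.symm
    refine ⟨ha0, fun l hl => ?_⟩
    have hAx' : A x = a⁻¹ • x := by rw [eq_inv_smul_iff₀ ha0]; exact hAx
    rw [F2, ← g2, hFx, ← add_smul, map_smul, hAx', smul_smul, map_smul, hl, smul_eq_mul,
      mul_comm, Complex.re_ofReal_mul]
    congr 2
    field_simp
    ring
  constructor
  · intro H u hu
    have hu0 : u ≠ 0 := by rintro rfl; simp at hu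
    have hmain : ∀ ζ ∈ ball (0 : ℂ) r, deriv (fun ζ : ℂ => ζ * f (ζ • u)) ζ ≠ 0 ∧
        0 < (1 + ζ * deriv (deriv (fun ζ : ℂ => ζ * f (ζ • u))) ζ /
          deriv (fun ζ : ℂ => ζ * f (ζ • u)) ζ).re := by
      intro ζ hζ
      have hx := hmem u hu ζ hζ
      by_cases hζ0 : ζ = 0
      · have := (g_calc hf (hsubr hx)).1
        rw [this, hζ0]
        simp [hf0]
      have hx0 : ζ • u ≠ 0 := smul_ne_zero hζ0 hu0
      obtain ⟨A, hA1, hA2, hl⟩ := H _ hx hx0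
      obtain ⟨v1, v2⟩ := hval u ζ (hsubr hx) hx0 A hA1
      refine ⟨v1, ?_⟩
      obtain ⟨l, hl1, hl2⟩ := exists_dual_vector ℂ (ζ • u) (norm_ne_zero_iff.2 hx0)
      have h3 := hl l hl2 hl1
      rw [v2 l hl2] at h3
      exact pos_of_mul_pos_right h3 (norm_nonneg _)
    obtain ⟨s1, s2⟩ := suff (hgd u hu) (fun z hz => (hmain z hz).1) (fun z hz => (hmain z hz).2)
    exact ⟨hgd u hu, s1, s2⟩
  · intro H x hx hx0
    have hxp : 0 < ‖x‖ := norm_pos_iff.2 hx0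
    have hxr : ‖x‖ < r := mem_ball_zero_iff.1 hx
    set ζ : ℂ := (‖x‖ : ℂ) with hζ
    have hζn : ‖ζ‖ = ‖x‖ := by rw [hζ, Complex.norm_real, norm_norm]
    have hζ0 : ζ ≠ 0 := by rw [← norm_pos_iff, hζn]; exact hxp
    set u : X := ζ⁻¹ • x with hu
    have hun : ‖u‖ = 1 := by rw [hu, norm_smul, norm_inv, hζn, inv_mul_cancel₀ hxp.ne']
    have hxu : ζ • u = x := by rw [hu, smul_inv_smul₀ hζ0]
    have hζm : ζ ∈ ball (0 : ℂ) r := by rw [mem_ball_zero_iff, hζn]; exact hxr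
    obtain ⟨q1, q2, q3⟩ := H u hun
    obtain ⟨n1, n2⟩ := nec hr0 q1 q2 q3 ζ hζm
    have hfx : f x ≠ 0 := by
      intro h
      have := q2 hζm (mem_ball_self hr0) (by simp [hxu, h])
      exact hζ0 this
    have hx1 : ζ • u ∈ ball (0 : X) 1 := by rw [hxu]; exact hsubr hx
    obtain ⟨F1, F2⟩ := F_calc hf hF (hsubr hx)
    have g1 := (g_calc hf hx1).1
    rw [hxu] at g1
    set a := deriv (fun ζ : ℂ => ζ * f (ζ • u)) ζ with ha
    have hlin : fderiv ℂ f x x = a - f x := by rw [g1]; ring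
    set A : X →L[ℂ] X := (f x)⁻¹ • (ContinuousLinearMap.id ℂ X -
      a⁻¹ • (fderiv ℂ f x).smulRight x) with hA
    have hAh : ∀ h, A h = (f x)⁻¹ • (h - a⁻¹ • (fderiv ℂ f x h) • x) := by
      intro h; simp [hA]
    have hA1 : A.comp (fderiv ℂ F x) = ContinuousLinearMap.id ℂ X := by
      ext h
      rw [ContinuousLinearMap.comp_apply, hAh, F1]
      simp only [map_add, map_smul, smul_eq_mul, hlin, ContinuousLinearMap.id_apply]
      match_scalars <;> field_simp <;> ring
    have hA2 : (fderiv ℂ F x).comp A = ContinuousLinearMap.id ℂ X := by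
      ext h
      rw [ContinuousLinearMap.comp_apply, F1, hAh]
      simp only [map_sub, map_smul, smul_eq_mul, hlin, ContinuousLinearMap.id_apply]
      match_scalars <;> field_simp <;> ring
    refine ⟨A, hA1, hA2, fun l hl _ => ?_⟩
    have hv := (hval u ζ hx1 (by rw [hxu]; exact hx0) A (by rw [hxu]; exact hA1)).2 l
      (by rw [hxu]; exact hl)
    rw [hxu] at hv
    rw [hv]
    exact mul_pos hxp n2
end
end
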